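/- arXiv:2110.09921 — 7 statements merged into one kernel-verified Lean document; each statement's English description precedes it below -/
import Mathlib

section
/- Every deduction in the system I can be converted into a deduction in normal form; precisely: for every deduction in I of a formula A whose undischarged assumptions are among Γ, there exists a deduction in I of A in normal form whose undischarged assumptions are among Γ. -/
set_option autoImplicit false

/-- Formulas of intuitionistic propositional logic: atomic formulas (indexed by
natural numbers), `⊥` (`falsum`), conjunction, disjunction and implication.
Following the paper, `⊥` is a (nullary) connective and not an atomic formula. -/
inductive Formula : Type
  | atom : ℕ → Formula
  | falsum : Formula
  | and : Formula → Formula → Formula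
  | or : Formula → Formula → Formula
  | imp : Formula → Formula → Formula
  deriving DecidableEq

/-- Deductions in Negri and von Plato's system **I** of intuitionistic
propositional logic with general introduction and elimination rules, indexed by
their conclusion.  Each constructor corresponds to a rule of the system:

* `ass A` : the one-formula deduction of `A` from the open assumption `A`;
* `andI d₁ d₂ d₃` : from deductions `d₁` of `A`, `d₂` of `B` (the specific
  premises) and a deduction `d₃` of `C` (the arbitrary premise) in which
  assumptions of the form `A ∧ B` may be discharged, infer `C`;
* `impI A d₁ d₂` : from a deduction `d₁` of `B` in which assumptions `A` may be
  discharged and a deduction `d₂` of `C` in which assumptions `A ⊃ B` may be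
  discharged, infer `C`;
* `orI₁ B d₁ d₂` / `orI₂ A d₁ d₂` : from a deduction of `A` (respectively of
  `B`) and a deduction of `C` in which assumptions `A ∨ B` may be discharged,
  infer `C`;
* `andE d₁ d₂` : from a deduction of the major premise `A ∧ B` and a deduction
  of `C` in which assumptions `A` and `B` may be discharged, infer `C`;
* `impE d₁ d₂ d₃` : from a deduction of the major premise `A ⊃ B`, a deduction
  of the minor premise `A`, and a deduction of `C` in which assumptions `B`
  may be discharged, infer `C`;
* `orE d₁ d₂ d₃` : from a deduction of the major premise `A ∨ B` and two
  deductions of `C` in which assumptions `A`, respectively `B`, may be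
  discharged, infer `C`;
* `falsumE d` : from a deduction of `⊥` infer any `C`.

Discharge is recorded by the function `hyps` below: a rule application
discharges all open occurrences of the indicated formulas in the indicated
subdeductions. -/
inductive Ded : Formula → Type
  | ass (A : Formula) : Ded A
  | andI {A B C : Formula} (d₁ : Ded A) (d₂ : Ded B) (d₃ : Ded C) : Ded C
  | impI (A : Formula) {B C : Formula} (d₁ : Ded B) (d₂ : Ded C) : Ded C
  | orI₁ {A : Formula} (B : Formula) {C : Formula} (d₁ : Ded A) (d₂ : Ded C) : Ded C
  | orI₂ (A : Formula) {B C : Formula} (d₁ : Ded B) (d₂ : Ded C) : Ded C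
  | andE {A B C : Formula} (d₁ : Ded (Formula.and A B)) (d₂ : Ded C) : Ded C
  | impE {A B C : Formula} (d₁ : Ded (Formula.imp A B)) (d₂ : Ded A) (d₃ : Ded C) : Ded C
  | orE {A B C : Formula} (d₁ : Ded (Formula.or A B)) (d₂ : Ded C) (d₃ : Ded C) : Ded C
  | falsumE {C : Formula} (d : Ded Formula.falsum) : Ded C

/-- The set of undischarged (open) assumptions of a deduction. -/
def hyps : ∀ {C : Formula}, Ded C → Set Formula
  | _, .ass A => {A}
  | _, @Ded.andI A B _ d₁ d₂ d₃ => hyps d₁ ∪ hyps d₂ ∪ (hyps d₃ \ {Formula.and A B})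
  | _, @Ded.impI A B _ d₁ d₂ => (hyps d₁ \ {A}) ∪ (hyps d₂ \ {Formula.imp A B})
  | _, @Ded.orI₁ A B _ d₁ d₂ => hyps d₁ ∪ (hyps d₂ \ {Formula.or A B})
  | _, @Ded.orI₂ A B _ d₁ d₂ => hyps d₁ ∪ (hyps d₂ \ {Formula.or A B})
  | _, @Ded.andE A B _ d₁ d₂ => hyps d₁ ∪ (hyps d₂ \ {A, B})
  | _, @Ded.impE _ B _ d₁ d₂ d₃ => hyps d₁ ∪ hyps d₂ ∪ (hyps d₃ \ {B})
  | _, @Ded.orE A B _ d₁ d₂ d₃ => hyps d₁ ∪ (hyps d₂ \ {A}) ∪ (hyps d₃ \ {B})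
  | _, .falsumE d => hyps d
/-- `d.isAss` holds iff `d` is a one-formula deduction, i.e. an assumption. -/
def Ded.isAss : ∀ {C : Formula}, Ded C → Bool
  | _, .ass _ => true
  | _, _ => false

/-- `MajorOpen F d` : somewhere in `d` there is an occurrence of the formula
`F` as an assumption (a leaf of the tree) that is the major premise of an
application of an elimination rule, and this occurrence is not discharged
within `d` (so that it can be discharged by a rule applied below `d`). -/
def MajorOpen (F : Formula) : ∀ {C : Formula}, Ded C → Prop
  | _, .ass _ => False
  | _, @Ded.andI A B _ d₁ d₂ d₃ =>
      MajorOpen F d₁ ∨ MajorOpen F d₂ ∨ (MajorOpen F d₃ ∧ F ≠ Formula.and A B)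
  | _, @Ded.impI A B _ d₁ d₂ =>
      (MajorOpen F d₁ ∧ F ≠ A) ∨ (MajorOpen F d₂ ∧ F ≠ Formula.imp A B)
  | _, @Ded.orI₁ A B _ d₁ d₂ =>
      MajorOpen F d₁ ∨ (MajorOpen F d₂ ∧ F ≠ Formula.or A B)
  | _, @Ded.orI₂ A B _ d₁ d₂ =>
      MajorOpen F d₁ ∨ (MajorOpen F d₂ ∧ F ≠ Formula.or A B)
  | _, @Ded.andE A B _ d₁ d₂ =>
      (F = Formula.and A B ∧ d₁.isAss = true) ∨ MajorOpen F d₁ ∨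
        (MajorOpen F d₂ ∧ F ≠ A ∧ F ≠ B)
  | _, @Ded.impE A B _ d₁ d₂ d₃ =>
      (F = Formula.imp A B ∧ d₁.isAss = true) ∨ MajorOpen F d₁ ∨ MajorOpen F d₂ ∨
        (MajorOpen F d₃ ∧ F ≠ B)
  | _, @Ded.orE A B _ d₁ d₂ d₃ =>
      (F = Formula.or A B ∧ d₁.isAss = true) ∨ MajorOpen F d₁ ∨
        (MajorOpen F d₂ ∧ F ≠ A) ∨ (MajorOpen F d₃ ∧ F ≠ B)
  | _, @Ded.falsumE _ d => (F = Formula.falsum ∧ d.isAss = true) ∨ MajorOpen F d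

/-- `HasMaxFormula d` : the deduction `d` contains a maximal formula, i.e. an
occurrence of a formula `A ∗ B` that is at the same time the major premise of
an application of `∗E` and the major assumption discharged by an application of
`∗I`. -/
def HasMaxFormula : ∀ {C : Formula}, Ded C → Prop
  | _, .ass _ => False
  | _, @Ded.andI A B _ d₁ d₂ d₃ =>
      MajorOpen (Formula.and A B) d₃ ∨ HasMaxFormula d₁ ∨ HasMaxFormula d₂ ∨ HasMaxFormula d₃
  | _, @Ded.impI A B _ d₁ d₂ =>
      MajorOpen (Formula.imp A B) d₂ ∨ HasMaxFormula d₁ ∨ HasMaxFormula d₂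
  | _, @Ded.orI₁ A B _ d₁ d₂ =>
      MajorOpen (Formula.or A B) d₂ ∨ HasMaxFormula d₁ ∨ HasMaxFormula d₂
  | _, @Ded.orI₂ A B _ d₁ d₂ =>
      MajorOpen (Formula.or A B) d₂ ∨ HasMaxFormula d₁ ∨ HasMaxFormula d₂
  | _, .andE d₁ d₂ => HasMaxFormula d₁ ∨ HasMaxFormula d₂
  | _, .impE d₁ d₂ d₃ => HasMaxFormula d₁ ∨ HasMaxFormula d₂ ∨ HasMaxFormula d₃
  | _, .orE d₁ d₂ d₃ => HasMaxFormula d₁ ∨ HasMaxFormula d₂ ∨ HasMaxFormula d₃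
  | _, .falsumE d => HasMaxFormula d

/-- The root rule application of `d` has an arbitrary premise; equivalently,
the conclusion of `d` is immediately preceded by an arbitrary premise of the
same shape, so that the conclusion of `d` is the last formula of a segment
(a sequence of occurrences of the same formula each of which is an arbitrary
premise of an application of a rule whose conclusion is the next one). -/
def Ded.endsWithArbitrary : ∀ {C : Formula}, Ded C → Prop
  | _, .ass _ => False
  | _, .falsumE _ => False
  | _, _ => True

/-- `HasMaxSegment d` : the deduction `d` contains a maximal segment, i.e. a
segment (of length `> 1`) whose last formula is the major premise of an
application of an elimination rule.  Since the first formula of a segment is an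
arbitrary premise and each later formula is the conclusion of a rule applied to
an arbitrary premise, this happens exactly when the major premise of some
elimination rule application in `d` is the conclusion of a rule application
that has an arbitrary premise. -/
def HasMaxSegment : ∀ {C : Formula}, Ded C → Prop
  | _, .ass _ => False
  | _, .andI d₁ d₂ d₃ => HasMaxSegment d₁ ∨ HasMaxSegment d₂ ∨ HasMaxSegment d₃
  | _, .impI _ d₁ d₂ => HasMaxSegment d₁ ∨ HasMaxSegment d₂
  | _, .orI₁ _ d₁ d₂ => HasMaxSegment d₁ ∨ HasMaxSegment d₂
  | _, .orI₂ _ d₁ d₂ => HasMaxSegment d₁ ∨ HasMaxSegment d₂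
  | _, .andE d₁ d₂ => d₁.endsWithArbitrary ∨ HasMaxSegment d₁ ∨ HasMaxSegment d₂
  | _, .impE d₁ d₂ d₃ =>
      d₁.endsWithArbitrary ∨ HasMaxSegment d₁ ∨ HasMaxSegment d₂ ∨ HasMaxSegment d₃
  | _, .orE d₁ d₂ d₃ =>
      d₁.endsWithArbitrary ∨ HasMaxSegment d₁ ∨ HasMaxSegment d₂ ∨ HasMaxSegment d₃
  | _, .falsumE d => d.endsWithArbitrary ∨ HasMaxSegment d

/-- A deduction is in normal form if it contains neither maximal formulas nor
maximal segments. -/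
def NormalForm {C : Formula} (d : Ded C) : Prop := ¬ HasMaxFormula d ∧ ¬ HasMaxSegment d

/-- Existence of a normal deduction. -/
def GN (Γ : Set Formula) (C : Formula) : Prop := ∃ d : Ded C, hyps d ⊆ Γ ∧ NormalForm d

theorem GN.mono {Γ Δ : Set Formula} {C : Formula} (h : Γ ⊆ Δ) : GN Γ C → GN Δ C :=
  fun ⟨d, h1, h2⟩ => ⟨d, h1.trans h, h2⟩

theorem GN.ax {Γ : Set Formula} {A : Formula} (h : A ∈ Γ) : GN Γ A :=
  ⟨.ass A, by simpa [hyps] using h, by simp [NormalForm, HasMaxFormula, HasMaxSegment]⟩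

theorem GN.botL {Γ : Set Formula} {C : Formula} (h : Formula.falsum ∈ Γ) : GN Γ C :=
  ⟨.falsumE (.ass _), by simpa [hyps] using h,
    by simp [NormalForm, HasMaxFormula, HasMaxSegment, Ded.endsWithArbitrary]⟩

theorem GN.andR {Γ : Set Formula} {A B : Formula} : GN Γ A → GN Γ B → GN Γ (.and A B) := by
  rintro ⟨d, h1, h2⟩ ⟨e, h3, h4⟩
  refine ⟨.andI d e (.ass (.and A B)), ?_, ?_⟩
  · simp [hyps, h1, h3]
  · simp_all [NormalForm, HasMaxFormula, HasMaxSegment, MajorOpen]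

theorem GN.impR {Γ : Set Formula} {A B : Formula} : GN (insert A Γ) B → GN Γ (.imp A B) := by
  rintro ⟨d, h1, h2⟩
  refine ⟨.impI A d (.ass (.imp A B)), ?_, ?_⟩
  · intro F hF
    have := @h1 F
    simp [hyps] at *
    tauto
  · simp_all [NormalForm, HasMaxFormula, HasMaxSegment, MajorOpen]

theorem GN.orR₁ {Γ : Set Formula} {A B : Formula} : GN Γ A → GN Γ (.or A B) := by
  rintro ⟨d, h1, h2⟩
  refine ⟨.orI₁ B d (.ass (.or A B)), ?_, ?_⟩
  · simp [hyps, h1]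
  · simp_all [NormalForm, HasMaxFormula, HasMaxSegment, MajorOpen]

theorem GN.orR₂ {Γ : Set Formula} {A B : Formula} : GN Γ B → GN Γ (.or A B) := by
  rintro ⟨d, h1, h2⟩
  refine ⟨.orI₂ A d (.ass (.or A B)), ?_, ?_⟩
  · simp [hyps, h1]
  · simp_all [NormalForm, HasMaxFormula, HasMaxSegment, MajorOpen]

theorem GN.andL {Γ : Set Formula} {A B C : Formula} (h : Formula.and A B ∈ Γ) :
    GN (insert A (insert B Γ)) C → GN Γ C := by
  rintro ⟨d, h1, h2⟩
  refine ⟨.andE (.ass (.and A B)) d, ?_, ?_⟩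
  · intro F hF
    have := @h1 F
    simp only [hyps, Set.mem_union, Set.mem_diff, Set.mem_insert_iff,
      Set.mem_singleton_iff] at *
    rcases hF with rfl | hF
    · exact h
    · tauto
  · simp_all [NormalForm, HasMaxFormula, HasMaxSegment, Ded.endsWithArbitrary]

theorem GN.impL {Γ : Set Formula} {A B C : Formula} (h : Formula.imp A B ∈ Γ) :
    GN Γ A → GN (insert B Γ) C → GN Γ C := by
  rintro ⟨d, h1, h2⟩ ⟨e, h3, h4⟩
  refine ⟨.impE (.ass (.imp A B)) d e, ?_, ?_⟩
  · intro F hF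
    have := @h1 F
    have := @h3 F
    simp only [hyps, Set.mem_union, Set.mem_diff, Set.mem_insert_iff,
      Set.mem_singleton_iff] at *
    rcases hF with (rfl | hF) | hF
    · exact h
    · tauto
    · tauto
  · simp_all [NormalForm, HasMaxFormula, HasMaxSegment, Ded.endsWithArbitrary]

theorem GN.orL {Γ : Set Formula} {A B C : Formula} (h : Formula.or A B ∈ Γ) :
    GN (insert A Γ) C → GN (insert B Γ) C → GN Γ C := by
  rintro ⟨d, h1, h2⟩ ⟨e, h3, h4⟩
  refine ⟨.orE (.ass (.or A B)) d e, ?_, ?_⟩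
  · intro F hF
    have := @h1 F
    have := @h3 F
    simp only [hyps, Set.mem_union, Set.mem_diff, Set.mem_insert_iff,
      Set.mem_singleton_iff] at *
    rcases hF with (rfl | hF) | hF
    · exact h
    · tauto
    · tauto
  · simp_all [NormalForm, HasMaxFormula, HasMaxSegment, Ded.endsWithArbitrary]

/-- Kripke-style semantics over contexts. -/
def Sem : Formula → Set Formula → Prop
  | .atom n, Γ => GN Γ (.atom n)
  | .falsum, Γ => ∀ C, GN Γ C
  | .and A B, Γ => Sem A Γ ∧ Sem B Γ
  | .or A B, Γ => ∀ Δ, Γ ⊆ Δ → ∀ C, (∀ Θ, Δ ⊆ Θ → Sem A Θ → GN Θ C) →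
      (∀ Θ, Δ ⊆ Θ → Sem B Θ → GN Θ C) → GN Δ C
  | .imp A B, Γ => ∀ Δ, Γ ⊆ Δ → Sem A Δ → Sem B Δ

theorem Sem.mono {A : Formula} {Γ Δ : Set Formula} (h : Γ ⊆ Δ) (s : Sem A Γ) : Sem A Δ := by
  induction A with
  | atom n => exact GN.mono h s
  | falsum => exact fun C => GN.mono h (s C)
  | and A B iA iB => exact ⟨iA s.1, iB s.2⟩
  | or A B _ _ => exact fun Θ hΘ => s Θ (h.trans hΘ)
  | imp A B _ _ => exact fun Θ hΘ => s Θ (h.trans hΘ)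

theorem Sem.close (A : Formula) : ∀ (Γ : Set Formula), (∀ Δ, Γ ⊆ Δ → ∀ C,
    (∀ Θ, Δ ⊆ Θ → Sem A Θ → GN Θ C) → GN Δ C) → Sem A Γ := by
  induction A with
  | atom n => exact fun Γ h => h Γ subset_rfl _ (fun _ _ s => s)
  | falsum => exact fun Γ h C => h Γ subset_rfl C (fun _ _ s => s C)
  | and A B iA iB =>
    exact fun Γ h => ⟨iA Γ fun Δ hΔ C k => h Δ hΔ C fun Θ hΘ s => k Θ hΘ s.1,
      iB Γ fun Δ hΔ C k => h Δ hΔ C fun Θ hΘ s => k Θ hΘ s.2⟩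
  | or A B _ _ =>
    exact fun Γ h Δ hΔ C k1 k2 => h Δ hΔ C fun Θ hΘ s => s Θ subset_rfl C
      (fun Ξ hΞ => k1 Ξ (hΘ.trans hΞ)) (fun Ξ hΞ => k2 Ξ (hΘ.trans hΞ))
  | imp A B _ iB =>
    exact fun Γ h Δ hΔ a => iB Δ fun Θ hΘ C k => h Θ (hΔ.trans hΘ) C fun Ξ hΞ s =>
      k Ξ hΞ (s Ξ subset_rfl (a.mono (hΘ.trans hΞ)))

theorem Sem.reify_reflect (A : Formula) :
    (∀ Γ, Sem A Γ → GN Γ A) ∧ (∀ Γ : Set Formula, A ∈ Γ → Sem A Γ) := by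
  induction A with
  | atom n => exact ⟨fun Γ s => s, fun Γ h => GN.ax h⟩
  | falsum => exact ⟨fun Γ s => s _, fun Γ h C => GN.botL h⟩
  | and A B iA iB =>
    refine ⟨fun Γ s => GN.andR (iA.1 Γ s.1) (iB.1 Γ s.2), fun Γ h => ⟨?_, ?_⟩⟩
    · exact Sem.close A Γ fun Δ hΔ C k => GN.andL (hΔ h)
        (k _ (fun x hx => by simp [hx]) (iA.2 _ (by simp)))
    · exact Sem.close B Γ fun Δ hΔ C k => GN.andL (hΔ h)
        (k _ (fun x hx => by simp [hx]) (iB.2 _ (by simp)))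
  | or A B iA iB =>
    refine ⟨fun Γ s => s Γ subset_rfl _ (fun Θ _ a => GN.orR₁ (iA.1 Θ a))
      (fun Θ _ b => GN.orR₂ (iB.1 Θ b)), fun Γ h Δ hΔ C k1 k2 => ?_⟩
    exact GN.orL (hΔ h) (k1 _ (Set.subset_insert _ _) (iA.2 _ (by simp)))
      (k2 _ (Set.subset_insert _ _) (iB.2 _ (by simp)))
  | imp A B iA iB =>
    refine ⟨fun Γ s => GN.impR (iB.1 _ (s _ (Set.subset_insert _ _) (iA.2 _ (by simp)))),
      fun Γ h Δ hΔ a => Sem.close B Δ fun Θ hΘ C k => ?_⟩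
    exact GN.impL (hΘ (hΔ h)) (iA.1 _ (a.mono hΘ))
      (k _ (Set.subset_insert _ _) (iB.2 _ (by simp)))

theorem Sem.sound {C : Formula} (d : Ded C) :
    ∀ Γ : Set Formula, (∀ F ∈ hyps d, Sem F Γ) → Sem C Γ := by
  induction d with
  | ass A => exact fun Γ h => h A (by simp [hyps])
  | @andI A B C d₁ d₂ d₃ i₁ i₂ i₃ =>
    intro Γ h
    refine i₃ Γ fun F hF => ?_
    by_cases e : F = .and A B
    · subst e
      exact ⟨i₁ Γ fun G hG => h G (by simp [hyps, hG]), i₂ Γ fun G hG => h G (by simp [hyps, hG])⟩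
    · exact h F (by simp [hyps, hF, e])
  | @impI A B C d₁ d₂ i₁ i₂ =>
    intro Γ h
    refine i₂ Γ fun F hF => ?_
    by_cases e : F = .imp A B
    · subst e
      intro Δ hΔ a
      refine i₁ Δ fun G hG => ?_
      by_cases e : G = A
      · exact e ▸ a
      · exact (h G (by simp [hyps, hG, e])).mono hΔ
    · exact h F (by simp [hyps, hF, e])
  | @orI₁ A B C d₁ d₂ i₁ i₂ =>
    intro Γ h
    refine i₂ Γ fun F hF => ?_
    by_cases e : F = .or A B
    · subst e
      exact fun Δ hΔ C k1 k2 => k1 Δ subset_rfl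
        ((i₁ Γ fun G hG => h G (by simp [hyps, hG])).mono hΔ)
    · exact h F (by simp [hyps, hF, e])
  | @orI₂ A B C d₁ d₂ i₁ i₂ =>
    intro Γ h
    refine i₂ Γ fun F hF => ?_
    by_cases e : F = .or A B
    · subst e
      exact fun Δ hΔ C k1 k2 => k2 Δ subset_rfl
        ((i₁ Γ fun G hG => h G (by simp [hyps, hG])).mono hΔ)
    · exact h F (by simp [hyps, hF, e])
  | @andE A B C d₁ d₂ i₁ i₂ =>
    intro Γ h
    have s : Sem (.and A B) Γ := i₁ Γ fun G hG => h G (by simp [hyps, hG])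
    refine i₂ Γ fun F hF => ?_
    by_cases e : F = A
    · exact e ▸ s.1
    by_cases e' : F = B
    · exact e' ▸ s.2
    exact h F (by simp [hyps, hF, e, e'])
  | @impE A B C d₁ d₂ d₃ i₁ i₂ i₃ =>
    intro Γ h
    have s : Sem (.imp A B) Γ := i₁ Γ fun G hG => h G (by simp [hyps, hG])
    have a : Sem A Γ := i₂ Γ fun G hG => h G (by simp [hyps, hG])
    refine i₃ Γ fun F hF => ?_
    by_cases e : F = B
    · exact e ▸ s Γ subset_rfl a
    exact h F (by simp [hyps, hF, e])
  | @orE A B C d₁ d₂ d₃ i₁ i₂ i₃ =>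
    intro Γ h
    have s : Sem (.or A B) Γ := i₁ Γ fun G hG => h G (by simp [hyps, hG])
    refine Sem.close C Γ fun Δ hΔ D k => s Δ hΔ D ?_ ?_
    · refine fun Θ hΘ a => k Θ hΘ (i₂ Θ fun F hF => ?_)
      by_cases e : F = A
      · exact e ▸ a
      · exact (h F (by simp [hyps, hF, e])).mono (hΔ.trans hΘ)
    · refine fun Θ hΘ a => k Θ hΘ (i₃ Θ fun F hF => ?_)
      by_cases e : F = B
      · exact e ▸ a
      · exact (h F (by simp [hyps, hF, e])).mono (hΔ.trans hΘ)
  | @falsumE C d i =>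
    intro Γ h
    have s : Sem .falsum Γ := i Γ fun G hG => h G (by simpa [hyps] using hG)
    exact Sem.close C Γ fun Δ hΔ D _ => (s D).mono hΔ

/-- **Normalisation for I** (Theorem 1 of the paper): every deduction in the
system I can be converted into a deduction in normal form.  Precisely: for
every deduction in I of a formula `A` whose undischarged assumptions are among
`Γ`, there exists a deduction in I of `A` in normal form whose undischarged
assumptions are among `Γ`. -/
theorem normalisation (Γ : Set Formula) (A : Formula) (d : Ded A) (hd : hyps d ⊆ Γ) :
    ∃ d' : Ded A, hyps d' ⊆ Γ ∧ NormalForm d' := by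
  exact (Sem.reify_reflect A).1 Γ
    (Sem.sound d Γ fun F hF => (Sem.reify_reflect F).2 Γ (hd hF))
end

section
/- In a deduction in I in normal form, if any major premises of elimination rules lie on a branch, then they precede (occur earlier on the branch than) any major assumptions discharged by introduction rules that lie on the branch. -/
set_option autoImplicit false

/-- The kinds of rule applications (including the degenerate case of an
assumption). -/
inductive RuleKind : Type
  | ass | andI | impI | orI₁ | orI₂ | andE | impE | orE | falsumE
  deriving DecidableEq

/-- The kind of the rule application at the root of a deduction. -/
def Ded.kind : ∀ {C : Formula}, Ded C → RuleKind
  | _, .ass _ => .ass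
  | _, .andI _ _ _ => .andI
  | _, .impI _ _ _ => .impI
  | _, .orI₁ _ _ _ => .orI₁
  | _, .orI₂ _ _ _ => .orI₂
  | _, .andE _ _ => .andE
  | _, .impE _ _ _ => .impE
  | _, .orE _ _ _ => .orE
  | _, .falsumE _ => .falsumE

/-- A position in a deduction tree: the path of child indices from the root.
Each position determines a formula occurrence, namely the conclusion of the
subdeduction at that position (a leaf is the occurrence of an assumption). -/
abbrev Pos := List ℕ

/-- A deduction together with its conclusion. -/
abbrev DedS := Σ C : Formula, Ded C

/-- The immediate subdeductions of a deduction, in the order: major premise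
(for eliminations), specific premises (for introductions), minor premise (for
`⊃E`), arbitrary premise last. -/
def children : ∀ {C : Formula}, Ded C → List DedS
  | _, .ass _ => []
  | _, .andI d₁ d₂ d₃ => [⟨_, d₁⟩, ⟨_, d₂⟩, ⟨_, d₃⟩]
  | _, .impI _ d₁ d₂ => [⟨_, d₁⟩, ⟨_, d₂⟩]
  | _, .orI₁ _ d₁ d₂ => [⟨_, d₁⟩, ⟨_, d₂⟩]
  | _, .orI₂ _ d₁ d₂ => [⟨_, d₁⟩, ⟨_, d₂⟩]
  | _, .andE d₁ d₂ => [⟨_, d₁⟩, ⟨_, d₂⟩]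
  | _, .impE d₁ d₂ d₃ => [⟨_, d₁⟩, ⟨_, d₂⟩, ⟨_, d₃⟩]
  | _, .orE d₁ d₂ d₃ => [⟨_, d₁⟩, ⟨_, d₂⟩, ⟨_, d₃⟩]
  | _, .falsumE d => [⟨_, d⟩]

/-- The subdeduction at a given position (if the position is valid). -/
def subAt : Pos → DedS → Option DedS
  | [], s => some s
  | i :: p, ⟨_, d⟩ =>
    match (children d)[i]? with
    | some s => subAt p s
    | none => none

/-- The kind of the rule application at a given position. -/
def kindAt (D : DedS) (q : Pos) : Option RuleKind := (subAt q D).map fun s => s.2.kind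

/-- `OpenLeafAt d p F` : position `p` in `d` is a leaf (assumption) carrying
the formula `F`, and this occurrence of `F` is not discharged by any rule
application in `d` (so it is open in `d`). -/
def OpenLeafAt : ∀ {C : Formula}, Ded C → Pos → Formula → Prop
  | _, .ass A, [], F => F = A
  | _, @Ded.andI _ _ _ d₁ _ _, 0 :: p, F => OpenLeafAt d₁ p F
  | _, @Ded.andI _ _ _ _ d₂ _, 1 :: p, F => OpenLeafAt d₂ p F
  | _, @Ded.andI A B _ _ _ d₃, 2 :: p, F => OpenLeafAt d₃ p F ∧ F ≠ Formula.and A B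
  | _, @Ded.impI A _ _ d₁ _, 0 :: p, F => OpenLeafAt d₁ p F ∧ F ≠ A
  | _, @Ded.impI A B _ _ d₂, 1 :: p, F => OpenLeafAt d₂ p F ∧ F ≠ Formula.imp A B
  | _, @Ded.orI₁ _ _ _ d₁ _, 0 :: p, F => OpenLeafAt d₁ p F
  | _, @Ded.orI₁ A B _ _ d₂, 1 :: p, F => OpenLeafAt d₂ p F ∧ F ≠ Formula.or A B
  | _, @Ded.orI₂ _ _ _ d₁ _, 0 :: p, F => OpenLeafAt d₁ p F
  | _, @Ded.orI₂ A B _ _ d₂, 1 :: p, F => OpenLeafAt d₂ p F ∧ F ≠ Formula.or A B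
  | _, @Ded.andE _ _ _ d₁ _, 0 :: p, F => OpenLeafAt d₁ p F
  | _, @Ded.andE A B _ _ d₂, 1 :: p, F => OpenLeafAt d₂ p F ∧ F ≠ A ∧ F ≠ B
  | _, @Ded.impE _ _ _ d₁ _ _, 0 :: p, F => OpenLeafAt d₁ p F
  | _, @Ded.impE _ _ _ _ d₂ _, 1 :: p, F => OpenLeafAt d₂ p F
  | _, @Ded.impE _ B _ _ _ d₃, 2 :: p, F => OpenLeafAt d₃ p F ∧ F ≠ B
  | _, @Ded.orE _ _ _ d₁ _ _, 0 :: p, F => OpenLeafAt d₁ p F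
  | _, @Ded.orE A _ _ _ d₂ _, 1 :: p, F => OpenLeafAt d₂ p F ∧ F ≠ A
  | _, @Ded.orE _ B _ _ _ d₃, 2 :: p, F => OpenLeafAt d₃ p F ∧ F ≠ B
  | _, .falsumE d, 0 :: p, F => OpenLeafAt d p F
  | _, _, _, _ => False

/-- `ElimDischargePos d p` : the root of `d` is an application of an
elimination rule and the (relative) position `p` is an assumption discharged by
this application. -/
def ElimDischargePos : ∀ {C : Formula}, Ded C → Pos → Prop
  | _, @Ded.andE A B _ _ d₂, p =>
      ∃ r, p = 1 :: r ∧ (OpenLeafAt d₂ r A ∨ OpenLeafAt d₂ r B)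
  | _, @Ded.impE _ B _ _ _ d₃, p => ∃ r, p = 2 :: r ∧ OpenLeafAt d₃ r B
  | _, @Ded.orE A B _ _ d₂ d₃, p =>
      (∃ r, p = 1 :: r ∧ OpenLeafAt d₂ r A) ∨ (∃ r, p = 2 :: r ∧ OpenLeafAt d₃ r B)
  | _, _, _ => False

/-- `IntroMajorDischargePos d p` : the root of `d` is an application of an
introduction rule and the (relative) position `p` is a major assumption
discharged by this application (an occurrence of `A ∧ B`, `A ⊃ B` or `A ∨ B`
discharged above the arbitrary premise). -/
def IntroMajorDischargePos : ∀ {C : Formula}, Ded C → Pos → Prop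
  | _, @Ded.andI A B _ _ _ d₃, p => ∃ r, p = 2 :: r ∧ OpenLeafAt d₃ r (Formula.and A B)
  | _, @Ded.impI A B _ _ d₂, p => ∃ r, p = 1 :: r ∧ OpenLeafAt d₂ r (Formula.imp A B)
  | _, @Ded.orI₁ A B _ _ d₂, p => ∃ r, p = 1 :: r ∧ OpenLeafAt d₂ r (Formula.or A B)
  | _, @Ded.orI₂ A B _ _ d₂, p => ∃ r, p = 1 :: r ∧ OpenLeafAt d₂ r (Formula.or A B)
  | _, _, _ => False

/-- `DischargedByElimAt D q p` : in the deduction `D`, the (absolute) position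
`p` is an assumption discharged by the elimination rule application at
position `q`. -/
def DischargedByElimAt (D : DedS) (q p : Pos) : Prop :=
  ∃ s, subAt q D = some s ∧ ∃ r, p = q ++ r ∧ ElimDischargePos s.2 r

/-- `MajorDischargedByIntroAt D q p` : in the deduction `D`, the (absolute)
position `p` is a major assumption discharged by the introduction rule
application at position `q`. -/
def MajorDischargedByIntroAt (D : DedS) (q p : Pos) : Prop :=
  ∃ s, subAt q D = some s ∧ ∃ r, p = q ++ r ∧ IntroMajorDischargePos s.2 r

/-- The rule kinds of the elimination rules. -/
def RuleKind.isElim : RuleKind → Prop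
  | .andE => True
  | .impE => True
  | .orE => True
  | .falsumE => True
  | _ => False

/-- `IsMajorPremisePos D p` : the occurrence at position `p` is the major
premise of an application of an elimination rule. -/
def IsMajorPremisePos (D : DedS) (p : Pos) : Prop :=
  ∃ q k, p = q ++ [0] ∧ kindAt D q = some k ∧ k.isElim

/-- The child indices of the specific premises of each rule kind. -/
def specificIdx : RuleKind → List ℕ
  | .andI => [0, 1]
  | .impI => [0]
  | .orI₁ => [0]
  | .orI₂ => [0]
  | _ => []

/-- The child indices of the arbitrary premises of each rule kind. -/
def arbitraryIdx : RuleKind → List ℕ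
  | .andI => [2]
  | .impI => [1]
  | .orI₁ => [1]
  | .orI₂ => [1]
  | .andE => [1]
  | .impE => [2]
  | .orE => [1, 2]
  | _ => []

/-- One step along a branch, from the occurrence at position `p` to the
occurrence at position `p'`:
* from the major premise of an elimination rule other than `⊥E` to an
  assumption discharged by that application;
* from the major premise of `⊥E` to its conclusion;
* from a specific premise of an introduction rule to a major assumption
  discharged by it;
* from an arbitrary premise to the conclusion of the rule. -/
def BranchStep (D : DedS) (p p' : Pos) : Prop :=
  (∃ q k, p = q ++ [0] ∧ kindAt D q = some k ∧
      (k = RuleKind.andE ∨ k = RuleKind.impE ∨ k = RuleKind.orE) ∧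
      DischargedByElimAt D q p') ∨
  (∃ q, p = q ++ [0] ∧ kindAt D q = some RuleKind.falsumE ∧ p' = q) ∨
  (∃ q k i, p = q ++ [i] ∧ kindAt D q = some k ∧ i ∈ specificIdx k ∧
      MajorDischargedByIntroAt D q p') ∨
  (∃ q k i, p = q ++ [i] ∧ kindAt D q = some k ∧ i ∈ arbitraryIdx k ∧ p' = q)

/-- `IsBranch D σ` : `σ` is a branch of the deduction `D`: a sequence of
(positions of) formula occurrences `σ₁, …, σₙ` such that `σ₁` is an assumption
that is neither discharged by an elimination rule nor a major assumption
discharged by an introduction rule, `σₙ` is either the conclusion of `D` or the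
minor premise of an application of `⊃E`, and each `σᵢ₊₁` is obtained from `σᵢ`
by a branch step. -/
def IsBranch (D : DedS) (σ : List Pos) : Prop :=
  σ ≠ [] ∧
  (∀ p ∈ σ, (subAt p D).isSome) ∧
  (∃ p, σ.head? = some p ∧ kindAt D p = some RuleKind.ass ∧
      (¬ ∃ q, DischargedByElimAt D q p) ∧ (¬ ∃ q, MajorDischargedByIntroAt D q p)) ∧
  (∃ p, σ.getLast? = some p ∧
      (p = [] ∨ ∃ q, p = q ++ [1] ∧ kindAt D q = some RuleKind.impE)) ∧
  σ.Chain' (BranchStep D)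

theorem subAt_cons {C : Formula} (d : Ded C) (i : ℕ) (p : Pos) (s : DedS) :
    subAt (i :: p) ⟨C, d⟩ = some s ↔ ∃ t, (children d)[i]? = some t ∧ subAt p t = some s := by
  simp only [subAt]
  cases h : (children d)[i]? <;> simp

theorem subAt_append (q r : Pos) (D s : DedS) (h : subAt q D = some s) :
    subAt (q ++ r) D = subAt r s := by
  induction q generalizing D with
  | nil => simp only [subAt, Option.some.injEq] at h; subst h; rfl
  | cons i q ih =>
    obtain ⟨C, d⟩ := D
    obtain ⟨t, ht, h⟩ := (subAt_cons ..).1 h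
    simp only [List.cons_append, subAt, ht]
    exact ih _ h

theorem major_nil (D : DedS) : ¬ IsMajorPremisePos D [] := by
  rintro ⟨q, k, h, -⟩
  simp at h

theorem major_cons {C : Formula} (d : Ded C) (i : ℕ) (p : Pos)
    (h : IsMajorPremisePos ⟨C, d⟩ (i :: p)) :
    (p = [] ∧ i = 0 ∧ d.kind.isElim) ∨
      ∃ t, (children d)[i]? = some t ∧ IsMajorPremisePos t p := by
  obtain ⟨q, k, hq, hk, he⟩ := h
  cases q with
  | nil =>
    simp at hq
    simp [kindAt, subAt] at hk
    subst hk
    exact Or.inl ⟨hq.2, hq.1, he⟩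
  | cons a q =>
    simp at hq
    obtain ⟨rfl, rfl⟩ := hq
    right
    simp only [kindAt, Option.map_eq_some_iff] at hk
    obtain ⟨s, hs, hk⟩ := hk
    obtain ⟨t, ht, h⟩ := (subAt_cons ..).1 hs
    exact ⟨t, ht, q, k, rfl, by simp [kindAt, h, hk], he⟩

theorem major_append (q r : Pos) (D s : DedS) (h : subAt q D = some s) (hr : r ≠ [])
    (hm : IsMajorPremisePos D (q ++ r)) : IsMajorPremisePos s r := by
  induction q generalizing D with
  | nil => simp only [subAt, Option.some.injEq] at h; subst h; exact hm
  | cons i q ih =>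
    obtain ⟨C, d⟩ := D
    obtain ⟨t, ht, h⟩ := (subAt_cons ..).1 h
    rcases major_cons _ _ _ hm with h' | ⟨t', ht', hm'⟩
    · simp [hr] at h'
    · rw [ht] at ht'; cases ht'
      exact ih _ h hm'

theorem normal_child {C : Formula} (d : Ded C) (hd : NormalForm d) (i : ℕ) (t : DedS)
    (ht : (children d)[i]? = some t) : NormalForm t.2 := by
  obtain ⟨h1, h2⟩ := hd
  cases d <;> rcases i with _ | _ | _ | i <;> simp [children] at ht <;> subst ht <;>
    simp only [HasMaxFormula, HasMaxSegment, not_or] at h1 h2 <;> constructor <;> tauto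

theorem normal_sub (q : Pos) (D s : DedS) (hd : NormalForm D.2) (h : subAt q D = some s) :
    NormalForm s.2 := by
  induction q generalizing D with
  | nil => simp only [subAt, Option.some.injEq] at h; subst h; exact hd
  | cons i q ih =>
    obtain ⟨C, d⟩ := D
    obtain ⟨t, ht, h⟩ := (subAt_cons ..).1 h
    exact ih _ (normal_child d hd i t ht) h

theorem openLeaf_nil {C : Formula} (d : Ded C) (F : Formula)
    (h : OpenLeafAt d [] F) : F = C ∧ d.isAss = true := by
  cases d <;> simp_all [OpenLeafAt, Ded.isAss]

theorem majorOpen_of {C : Formula} (d : Ded C) (p : Pos) (F : Formula)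
    (h : OpenLeafAt d p F) (hm : IsMajorPremisePos ⟨C, d⟩ p) : MajorOpen F d := by
  induction d generalizing p <;> rcases p with _ | ⟨_ | _ | _ | i, p⟩ <;>
    first
    | exact absurd hm (major_nil _)
    | (simp [OpenLeafAt] at h; done)
    | (rcases major_cons _ _ _ hm with ⟨rfl, h0, he⟩ | ⟨t, ht, hm'⟩
       · simp [Ded.kind, RuleKind.isElim] at h0 he
         try (simp only [OpenLeafAt] at h
              have := openLeaf_nil _ _ h
              simp only [MajorOpen]; tauto)
       · simp [children] at ht
         subst ht
         simp [OpenLeafAt] at h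
         simp only [MajorOpen]
         grind)

theorem kind_of_not_arb {C : Formula} (d : Ded C) (h : ¬ d.endsWithArbitrary) :
    d.kind = .ass ∨ d.kind = .falsumE := by
  cases d <;> simp [Ded.endsWithArbitrary, Ded.kind] at h ⊢

theorem major_kind {C : Formula} (d : Ded C) (hd : NormalForm d) (p : Pos)
    (hm : IsMajorPremisePos ⟨C, d⟩ p) :
    kindAt ⟨C, d⟩ p = some .ass ∨ kindAt ⟨C, d⟩ p = some .falsumE := by
  obtain ⟨q, k, rfl, hk, he⟩ := hm
  simp only [kindAt, Option.map_eq_some_iff] at hk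
  obtain ⟨⟨E, e⟩, hs, rfl⟩ := hk
  have hn := (normal_sub _ _ _ hd hs).2
  rw [kindAt, subAt_append _ _ _ _ hs]
  cases e <;> simp only [Ded.kind, RuleKind.isElim] at he <;>
    simp only [HasMaxSegment, not_or] at hn <;>
    simpa [subAt, children] using kind_of_not_arb _ hn.1

theorem intro_not_major {C : Formula} (d : Ded C) (hd : NormalForm d) (p : Pos)
    (hdis : ∃ q, MajorDischargedByIntroAt ⟨C, d⟩ q p) : ¬ IsMajorPremisePos ⟨C, d⟩ p := by
  obtain ⟨q, ⟨E, e⟩, hs, r, rfl, hr⟩ := hdis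
  intro hm
  have hn := (normal_sub _ _ _ hd hs).1
  have hne : r ≠ [] := by
    rintro rfl
    cases e <;> simp [IntroMajorDischargePos] at hr
  have hm := major_append _ _ _ _ hs hne hm
  cases e <;> simp only [IntroMajorDischargePos] at hr <;>
    obtain ⟨r, rfl, hr⟩ := hr <;>
    (rcases major_cons _ _ _ hm with h0 | ⟨t, ht, hm'⟩
     · simp at h0
     · simp [children] at ht
       subst ht
       have := majorOpen_of _ _ _ hr hm'
       simp [HasMaxFormula, this] at hn)

theorem step_not_major {C : Formula} (d : Ded C) (hd : NormalForm d) (p p' : Pos)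
    (hst : BranchStep ⟨C, d⟩ p p') (hp : ¬ IsMajorPremisePos ⟨C, d⟩ p) :
    ¬ IsMajorPremisePos ⟨C, d⟩ p' := by
  rcases hst with ⟨q, k, rfl, hk, hk', -⟩ | ⟨q, rfl, hk, -⟩ | ⟨q, k, i, -, -, -, h⟩ |
    ⟨q, k, i, rfl, hk, hi, rfl⟩
  · refine absurd ⟨q, k, rfl, hk, ?_⟩ hp
    rcases hk' with rfl | rfl | rfl <;> trivial
  · exact absurd ⟨q, _, rfl, hk, trivial⟩ hp
  · exact intro_not_major d hd p' ⟨q, h⟩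
  · intro hm
    rcases major_kind d hd _ hm with h | h <;> rw [hk] at h <;> cases h <;>
      simp [arbitraryIdx] at hi

/-- **Corollary (order of branches)**: in a deduction in normal form, if any
major premises of elimination rules lie on a branch, then they precede (occur
strictly earlier on the branch than) any major assumptions discharged by
introduction rules that lie on the branch. -/
theorem elim_majors_precede_intro_discharges_on_branch
    {C : Formula} (d : Ded C) (hd : NormalForm d) (σ : List Pos)
    (hσ : IsBranch ⟨C, d⟩ σ) (i j : ℕ) (hi : i < σ.length) (hj : j < σ.length)
    (hmaj : IsMajorPremisePos ⟨C, d⟩ (σ.get ⟨i, hi⟩))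
    (hdis : ∃ q, MajorDischargedByIntroAt ⟨C, d⟩ q (σ.get ⟨j, hj⟩)) :
    i < j := by
  by_contra! hle
  have key : ∀ i, j ≤ i → ∀ hi : i < σ.length, ¬ IsMajorPremisePos ⟨C, d⟩ (σ.get ⟨i, hi⟩) := by
    intro i hji
    induction i, hji using Nat.le_induction with
    | base => intro _; exact intro_not_major d hd _ hdis
    | succ n hn ih =>
      intro hi
      have hc := hσ.2.2.2.2
      have hst : BranchStep ⟨C, d⟩ σ[n] σ[n+1] := List.isChain_iff_getElem.1 hc n hi
      exact step_not_major d hd _ _ hst (ih (by omega))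
  exact key i hle hi hmaj
end

section
/- For any deduction in I of a formula A from undischarged assumptions Γ, there is a deduction in I of A from undischarged assumptions among Γ that has the subformula property. -/
set_option autoImplicit false

/-- The set of all formulas occurring in a deduction: the formula at every node
of the deduction tree (assumptions, premises and conclusions of all rule
applications). -/
def formulas : ∀ {C : Formula}, Ded C → Set Formula
  | _, .ass A => {A}
  | C, .andI d₁ d₂ d₃ => insert C (formulas d₁ ∪ formulas d₂ ∪ formulas d₃)
  | C, .impI _ d₁ d₂ => insert C (formulas d₁ ∪ formulas d₂)
  | C, .orI₁ _ d₁ d₂ => insert C (formulas d₁ ∪ formulas d₂)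
  | C, .orI₂ _ d₁ d₂ => insert C (formulas d₁ ∪ formulas d₂)
  | C, .andE d₁ d₂ => insert C (formulas d₁ ∪ formulas d₂)
  | C, .impE d₁ d₂ d₃ => insert C (formulas d₁ ∪ formulas d₂ ∪ formulas d₃)
  | C, .orE d₁ d₂ d₃ => insert C (formulas d₁ ∪ formulas d₂ ∪ formulas d₃)
  | C, .falsumE d => insert C (formulas d)

/-- `Subformula F A` : `F` is a subformula of `A`. -/
inductive Subformula : Formula → Formula → Prop
  | refl (A : Formula) : Subformula A A
  | and_left {F A B : Formula} : Subformula F A → Subformula F (Formula.and A B)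
  | and_right {F A B : Formula} : Subformula F B → Subformula F (Formula.and A B)
  | or_left {F A B : Formula} : Subformula F A → Subformula F (Formula.or A B)
  | or_right {F A B : Formula} : Subformula F B → Subformula F (Formula.or A B)
  | imp_left {F A B : Formula} : Subformula F A → Subformula F (Formula.imp A B)
  | imp_right {F A B : Formula} : Subformula F B → Subformula F (Formula.imp A B)

/-- A deduction of a conclusion `C` has the subformula property if every
formula occurring in it is a subformula of `C` or of one of its undischarged
assumptions. -/
def HasSubformulaProperty {C : Formula} (d : Ded C) : Prop :=
  ∀ F ∈ formulas d, Subformula F C ∨ ∃ H ∈ hyps d, Subformula F H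


theorem Subformula.trans' {F A B : Formula} (h : Subformula F A) (h' : Subformula A B) :
    Subformula F B := by
  induction h' with
  | refl => exact h
  | and_left _ ih => exact .and_left ih
  | and_right _ ih => exact .and_right ih
  | or_left _ ih => exact .or_left ih
  | or_right _ ih => exact .or_right ih
  | imp_left _ ih => exact .imp_left ih
  | imp_right _ ih => exact .imp_right ih

theorem hyps_finite {C : Formula} (d : Ded C) : (hyps d).Finite := by
  induction d with
  | ass A => exact Set.finite_singleton A
  | andI _ _ _ h1 h2 h3 => exact (h1.union h2).union h3.sdiff
  | impI _ _ _ h1 h2 => exact h1.sdiff.union h2.sdiff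
  | orI₁ _ _ _ h1 h2 => exact h1.union h2.sdiff
  | orI₂ _ _ _ h1 h2 => exact h1.union h2.sdiff
  | andE _ _ h1 h2 => exact h1.union h2.sdiff
  | impE _ _ _ h1 h2 h3 => exact (h1.union h2).union h3.sdiff
  | orE _ _ _ h1 h2 h3 => exact (h1.union h2.sdiff).union h3.sdiff
  | falsumE _ h => exact h

theorem ded_subst {A : Formula} (e : Ded A) {B : Formula} (d : Ded B) :
    ∃ d' : Ded B, hyps d' ⊆ (hyps d \ {A}) ∪ hyps e ∧ formulas d' ⊆ formulas d ∪ formulas e := by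
  induction d with
  | ass X =>
    by_cases h : X = A
    · subst h
      exact ⟨e, Set.subset_union_right, Set.subset_union_right⟩
    · refine ⟨.ass X, ?_, Set.subset_union_left⟩
      intro x hx
      have hx : x = X := hx
      subst hx
      exact Or.inl ⟨rfl, h⟩
  | andI _ _ _ h1 h2 h3 =>
    obtain ⟨e1, a1, b1⟩ := h1
    obtain ⟨e2, a2, b2⟩ := h2
    obtain ⟨e3, a3, b3⟩ := h3
    refine ⟨.andI e1 e2 e3, ?_, ?_⟩ <;> simp only [hyps, formulas] <;> grind
  | impI X _ _ h1 h2 =>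
    obtain ⟨e1, a1, b1⟩ := h1
    obtain ⟨e2, a2, b2⟩ := h2
    refine ⟨.impI X e1 e2, ?_, ?_⟩ <;> simp only [hyps, formulas] <;> grind
  | orI₁ X _ _ h1 h2 =>
    obtain ⟨e1, a1, b1⟩ := h1
    obtain ⟨e2, a2, b2⟩ := h2
    refine ⟨.orI₁ X e1 e2, ?_, ?_⟩ <;> simp only [hyps, formulas] <;> grind
  | orI₂ X _ _ h1 h2 =>
    obtain ⟨e1, a1, b1⟩ := h1
    obtain ⟨e2, a2, b2⟩ := h2
    refine ⟨.orI₂ X e1 e2, ?_, ?_⟩ <;> simp only [hyps, formulas] <;> grind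
  | andE _ _ h1 h2 =>
    obtain ⟨e1, a1, b1⟩ := h1
    obtain ⟨e2, a2, b2⟩ := h2
    refine ⟨.andE e1 e2, ?_, ?_⟩ <;> simp only [hyps, formulas] <;> grind
  | impE _ _ _ h1 h2 h3 =>
    obtain ⟨e1, a1, b1⟩ := h1
    obtain ⟨e2, a2, b2⟩ := h2
    obtain ⟨e3, a3, b3⟩ := h3
    refine ⟨.impE e1 e2 e3, ?_, ?_⟩ <;> simp only [hyps, formulas] <;> grind
  | orE _ _ _ h1 h2 h3 =>
    obtain ⟨e1, a1, b1⟩ := h1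
    obtain ⟨e2, a2, b2⟩ := h2
    obtain ⟨e3, a3, b3⟩ := h3
    refine ⟨.orE e1 e2 e3, ?_, ?_⟩ <;> simp only [hyps, formulas] <;> grind
  | falsumE _ h =>
    obtain ⟨e1, a1, b1⟩ := h
    refine ⟨.falsumE e1, ?_, ?_⟩ <;> simp only [hyps, formulas] <;> grind

/-- Derivability using only formulas from `S`. -/
def Prov (S Γ : Set Formula) (A : Formula) : Prop :=
  ∃ d : Ded A, hyps d ⊆ Γ ∧ formulas d ⊆ S

theorem Prov.cut {S Γ : Set Formula} {A B : Formula} (h1 : Prov S Γ A)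
    (h2 : Prov S (insert A Γ) B) : Prov S Γ B := by
  obtain ⟨e, a1, b1⟩ := h1
  obtain ⟨d, a2, b2⟩ := h2
  obtain ⟨d', a, b⟩ := ded_subst e d
  exact ⟨d', by grind, by grind⟩

/-- Worlds of the canonical model: subsets of `S` maximal not deriving some `D`. -/
def World (S Δ : Set Formula) : Prop :=
  Δ ⊆ S ∧ ∃ D ∈ S, ¬ Prov S Δ D ∧ ∀ A ∈ S, A ∉ Δ → Prov S (insert A Δ) D

theorem World.closed {S Δ : Set Formula} (w : World S Δ) {A : Formula} (hA : A ∈ S)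
    (h : Prov S Δ A) : A ∈ Δ := by
  obtain ⟨_, D, _, hn, hm⟩ := w
  by_contra hc
  exact hn (h.cut (hm A hA hc))

theorem exists_world {S Γ : Set Formula} {D : Formula} (hΓ : Γ ⊆ S) (hD : D ∈ S)
    (h : ¬ Prov S Γ D) : ∃ Δ, Γ ⊆ Δ ∧ World S Δ ∧ D ∉ Δ := by
  obtain ⟨m, hm, hmax⟩ := zorn_subset_nonempty {Δ | Δ ⊆ S ∧ ¬ Prov S Δ D} (by
    intro c hc hch hne
    refine ⟨⋃₀ c, ⟨Set.sUnion_subset fun s hs => (hc hs).1, ?_⟩, fun s hs =>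
      Set.subset_sUnion_of_mem hs⟩
    rintro ⟨d, hd, hf⟩
    obtain ⟨t, ht, hdt⟩ := DirectedOn.exists_mem_subset_of_finite_of_subset_sUnion hne
      hch.directedOn (hyps_finite d) hd
    exact (hc ht).2 ⟨d, hdt, hf⟩) Γ ⟨hΓ, h⟩
  refine ⟨m, hm, ⟨hmax.prop.1, D, hD, hmax.prop.2, ?_⟩, ?_⟩
  · intro A hA hAm
    by_contra hc
    exact hAm (hmax.le_of_ge (y := insert A m) ⟨Set.insert_subset hA hmax.prop.1, hc⟩
      (Set.subset_insert _ _) (Set.mem_insert _ _))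
  · intro hDm
    exact hmax.prop.2 ⟨.ass D, by simpa [hyps] using hDm, by simpa [formulas] using hD⟩

def Force (S : Set Formula) : Formula → Set Formula → Prop
  | .atom n, Δ => Formula.atom n ∈ Δ
  | .falsum, _ => False
  | .and A B, Δ => Force S A Δ ∧ Force S B Δ
  | .or A B, Δ => Force S A Δ ∨ Force S B Δ
  | .imp A B, Δ => ∀ Δ', Δ ⊆ Δ' → World S Δ' → Force S A Δ' → Force S B Δ'

theorem Force.mono {S : Set Formula} {A : Formula} {Δ Δ' : Set Formula} (hs : Δ ⊆ Δ')
    (h : Force S A Δ) : Force S A Δ' := by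
  induction A with
  | atom n => exact hs h
  | falsum => exact h
  | and A B h1 h2 => exact ⟨h1 h.1, h2 h.2⟩
  | or A B h1 h2 => exact h.imp h1 h2
  | imp A B h1 h2 => exact fun Δ'' hs' => h Δ'' (hs.trans hs')

theorem soundness {S : Set Formula} {C : Formula} (d : Ded C) :
    ∀ Δ, World S Δ → (∀ H ∈ hyps d, Force S H Δ) → Force S C Δ := by
  induction d with
  | ass A => exact fun Δ w h => h A rfl
  | @andI A B C d1 d2 d3 h1 h2 h3 =>
    intro Δ w h
    simp only [hyps] at h
    have f1 := h1 Δ w (by grind)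
    have f2 := h2 Δ w (by grind)
    have f : Force S (A.and B) Δ := ⟨f1, f2⟩
    exact h3 Δ w (by grind)
  | @impI A B C d1 d2 h1 h2 =>
    intro Δ w h
    simp only [hyps] at h
    have f : Force S (A.imp B) Δ := fun Δ' hs w' hA => h1 Δ' w' (by
      intro H hH
      by_cases e : H = A
      · exact e ▸ hA
      · exact (h H (Or.inl ⟨hH, e⟩)).mono hs)
    exact h2 Δ w (by grind)
  | @orI₁ A B C d1 d2 h1 h2 =>
    intro Δ w h
    simp only [hyps] at h
    have f : Force S (A.or B) Δ := Or.inl (h1 Δ w (by grind))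
    exact h2 Δ w (by grind)
  | @orI₂ A B C d1 d2 h1 h2 =>
    intro Δ w h
    simp only [hyps] at h
    have f : Force S (A.or B) Δ := Or.inr (h1 Δ w (by grind))
    exact h2 Δ w (by grind)
  | @andE A B C d1 d2 h1 h2 =>
    intro Δ w h
    simp only [hyps] at h
    obtain ⟨fa, fb⟩ : Force S (A.and B) Δ := h1 Δ w (by grind)
    exact h2 Δ w (by grind)
  | @impE A B C d1 d2 d3 h1 h2 h3 =>
    intro Δ w h
    simp only [hyps] at h
    have f : Force S (A.imp B) Δ := h1 Δ w (by grind)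
    have fb := f Δ subset_rfl w (h2 Δ w (by grind))
    exact h3 Δ w (by grind)
  | @orE A B C d1 d2 d3 h1 h2 h3 =>
    intro Δ w h
    simp only [hyps] at h
    obtain f | f : Force S (A.or B) Δ := h1 Δ w (by grind)
    · exact h2 Δ w (by grind)
    · exact h3 Δ w (by grind)
  | falsumE d h1 =>
    intro Δ w h
    exact (h1 Δ w h).elim

theorem truth {S : Set Formula} (hS : ∀ A B, B ∈ S → Subformula A B → A ∈ S) (A : Formula) :
    ∀ Δ, A ∈ S → World S Δ → (Force S A Δ ↔ A ∈ Δ) := by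
  induction A with
  | atom n => exact fun _ _ _ => Iff.rfl
  | falsum =>
    intro Δ hA w
    refine ⟨False.elim, fun h => ?_⟩
    obtain ⟨_, D, hD, hn, _⟩ := w
    exact hn ⟨.falsumE (.ass _), by simp only [hyps]; grind, by simp only [formulas]; grind⟩
  | and A B h1 h2 =>
    intro Δ hAB w
    have hA : A ∈ S := hS _ _ hAB (.and_left (.refl _))
    have hB : B ∈ S := hS _ _ hAB (.and_right (.refl _))
    simp only [Force, h1 Δ hA w, h2 Δ hB w]
    constructor
    · rintro ⟨a, b⟩
      exact w.closed hAB ⟨.andI (.ass A) (.ass B) (.ass (A.and B)),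
        by simp only [hyps]; grind, by simp only [formulas]; grind⟩
    · intro h
      exact ⟨w.closed hA ⟨.andE (.ass (A.and B)) (.ass A),
          by simp only [hyps]; grind, by simp only [formulas]; grind⟩,
        w.closed hB ⟨.andE (.ass (A.and B)) (.ass B),
          by simp only [hyps]; grind, by simp only [formulas]; grind⟩⟩
  | or A B h1 h2 =>
    intro Δ hAB w
    have hA : A ∈ S := hS _ _ hAB (.or_left (.refl _))
    have hB : B ∈ S := hS _ _ hAB (.or_right (.refl _))
    simp only [Force, h1 Δ hA w, h2 Δ hB w]
    constructor
    · rintro (a | b)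
      · exact w.closed hAB ⟨.orI₁ B (.ass A) (.ass (A.or B)),
          by simp only [hyps]; grind, by simp only [formulas]; grind⟩
      · exact w.closed hAB ⟨.orI₂ A (.ass B) (.ass (A.or B)),
          by simp only [hyps]; grind, by simp only [formulas]; grind⟩
    · intro h
      obtain ⟨_, D, hD, hn, hm⟩ := w
      by_contra hc
      push Not at hc
      obtain ⟨d1, a1, b1⟩ := hm A hA hc.1
      obtain ⟨d2, a2, b2⟩ := hm B hB hc.2
      exact hn ⟨.orE (.ass (A.or B)) d1 d2,
        by simp only [hyps]; grind, by simp only [formulas]; grind⟩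
  | imp A B h1 h2 =>
    intro Δ hAB w
    have hA : A ∈ S := hS _ _ hAB (.imp_left (.refl _))
    have hB : B ∈ S := hS _ _ hAB (.imp_right (.refl _))
    constructor
    · intro f
      apply w.closed hAB
      by_cases hp : Prov S (insert A Δ) B
      · obtain ⟨d, a, b⟩ := hp
        exact ⟨.impI A d (.ass (A.imp B)),
          by simp only [hyps]; grind, by simp only [formulas]; grind⟩
      · obtain ⟨Δ', hs, w', hn⟩ := exists_world (Set.insert_subset hA w.1) hB hp
        refine absurd ((h2 Δ' hB w').1 (f Δ' ?_ w' ((h1 Δ' hA w').2 ?_))) hn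
        · exact (Set.subset_insert _ _).trans hs
        · exact hs (Set.mem_insert _ _)
    · intro h Δ' hs w' fA
      rw [h1 Δ' hA w'] at fA
      rw [h2 Δ' hB w']
      exact w'.closed hB ⟨.impE (.ass (A.imp B)) (.ass A) (.ass B),
          by simp only [hyps]; grind, by simp only [formulas]; grind⟩

theorem weak_subformula {A : Formula} (d : Ded A) :
    Prov {F | Subformula F A ∨ ∃ H ∈ hyps d, Subformula F H} (hyps d) A := by
  set S := {F | Subformula F A ∨ ∃ H ∈ hyps d, Subformula F H} with hSdef
  have hS : ∀ A B, B ∈ S → Subformula A B → A ∈ S := by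
    rintro X Y (h | ⟨H, hH, h⟩) h'
    · exact Or.inl (h'.trans' h)
    · exact Or.inr ⟨H, hH, h'.trans' h⟩
  have hΓ : hyps d ⊆ S := fun H hH => Or.inr ⟨H, hH, .refl _⟩
  have hA : A ∈ S := Or.inl (.refl _)
  by_contra hc
  obtain ⟨Δ, hs, w, hn⟩ := exists_world hΓ hA hc
  exact hn ((truth hS A Δ hA w).1 (soundness d Δ w fun H hH =>
    (truth hS H Δ (hΓ hH) w).2 (hs hH)))

/-- **Corollary (subformula property)**: for any deduction in I of a formula
`A` from undischarged assumptions `Γ`, there is a deduction in I of `A` from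
undischarged assumptions among `Γ` that has the subformula property. -/
theorem subformula_property (Γ : Set Formula) (A : Formula) (d : Ded A) (hd : hyps d ⊆ Γ) :
    ∃ d' : Ded A, hyps d' ⊆ Γ ∧ HasSubformulaProperty d' := by
  induction hn : (hyps d).ncard using Nat.strong_induction_on generalizing d with
  | _ n ih =>
    obtain ⟨d', hd', hf⟩ := weak_subformula d
    by_cases he : hyps d' = hyps d
    · exact ⟨d', hd'.trans hd, by intro F hF; rw [he]; exact hf hF⟩
    · exact ih _ (hn ▸ Set.ncard_lt_ncard (hd'.ssubset_of_ne he) (hyps_finite d)) d'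
        (hd'.trans hd) rfl
end

section
/- Any deduction in I can be transformed into a deduction of the same conclusion from the same undischarged assumptions in which every application of a general introduction rule discharges exactly one major assumption (exactly one occurrence of the formula A∗B introduced by the rule). -/
set_option autoImplicit false

/-- `countOpen F d` : the number of occurrences of the formula `F` as an
assumption (leaf) of `d` that are not discharged within `d`, i.e. the number of
occurrences of `F` that would be discharged by a rule applied below `d` that
discharges assumptions `F`. -/
def countOpen (F : Formula) : ∀ {C : Formula}, Ded C → ℕ
  | _, .ass A => if F = A then 1 else 0
  | _, @Ded.andI A B _ d₁ d₂ d₃ =>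
      countOpen F d₁ + countOpen F d₂ +
        (if F = Formula.and A B then 0 else countOpen F d₃)
  | _, @Ded.impI A B _ d₁ d₂ =>
      (if F = A then 0 else countOpen F d₁) +
        (if F = Formula.imp A B then 0 else countOpen F d₂)
  | _, @Ded.orI₁ A B _ d₁ d₂ =>
      countOpen F d₁ + (if F = Formula.or A B then 0 else countOpen F d₂)
  | _, @Ded.orI₂ A B _ d₁ d₂ =>
      countOpen F d₁ + (if F = Formula.or A B then 0 else countOpen F d₂)
  | _, @Ded.andE A B _ d₁ d₂ =>
      countOpen F d₁ + (if F = A ∨ F = B then 0 else countOpen F d₂)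
  | _, @Ded.impE _ B _ d₁ d₂ d₃ =>
      countOpen F d₁ + countOpen F d₂ + (if F = B then 0 else countOpen F d₃)
  | _, @Ded.orE A B _ d₁ d₂ d₃ =>
      countOpen F d₁ + (if F = A then 0 else countOpen F d₂) +
        (if F = B then 0 else countOpen F d₃)
  | _, .falsumE d => countOpen F d

/-- `UniqueDischarge d` : every application of a general introduction rule in
`d` discharges exactly one major assumption, i.e. exactly one occurrence of the
formula `A ∗ B` introduced by the rule. -/
def UniqueDischarge : ∀ {C : Formula}, Ded C → Prop
  | _, .ass _ => True
  | _, @Ded.andI A B _ d₁ d₂ d₃ =>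
      countOpen (Formula.and A B) d₃ = 1 ∧
        UniqueDischarge d₁ ∧ UniqueDischarge d₂ ∧ UniqueDischarge d₃
  | _, @Ded.impI A B _ d₁ d₂ =>
      countOpen (Formula.imp A B) d₂ = 1 ∧ UniqueDischarge d₁ ∧ UniqueDischarge d₂
  | _, @Ded.orI₁ A B _ d₁ d₂ =>
      countOpen (Formula.or A B) d₂ = 1 ∧ UniqueDischarge d₁ ∧ UniqueDischarge d₂
  | _, @Ded.orI₂ A B _ d₁ d₂ =>
      countOpen (Formula.or A B) d₂ = 1 ∧ UniqueDischarge d₁ ∧ UniqueDischarge d₂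
  | _, .andE d₁ d₂ => UniqueDischarge d₁ ∧ UniqueDischarge d₂
  | _, .impE d₁ d₂ d₃ => UniqueDischarge d₁ ∧ UniqueDischarge d₂ ∧ UniqueDischarge d₃
  | _, .orE d₁ d₂ d₃ => UniqueDischarge d₁ ∧ UniqueDischarge d₂ ∧ UniqueDischarge d₃
  | _, .falsumE d => UniqueDischarge d

/-- Replace all open occurrences of `F` by exactly one. -/
def contract (F : Formula) {C : Formula} (d : Ded C) : Ded C :=
  Ded.orE (Ded.orI₁ F (Ded.ass F) (Ded.ass (Formula.or F F))) d d

theorem countOpen_contract (F : Formula) {C : Formula} (d : Ded C) :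
    countOpen F (contract F d) = 1 := by
  simp [contract, countOpen]

theorem hyps_contract (F : Formula) {C : Formula} (d : Ded C) :
    hyps (contract F d) \ {F} = hyps d \ {F} := by
  ext x
  simp [contract, hyps]
  tauto

theorem unique_contract (F : Formula) {C : Formula} (d : Ded C) (h : UniqueDischarge d) :
    UniqueDischarge (contract F d) := by
  simp [contract, UniqueDischarge, countOpen, h]

/-- **Proposition (unique discharge)**: any deduction in I can be transformed
into a deduction of the same conclusion from the same undischarged assumptions
in which every application of a general introduction rule discharges exactly
one major assumption. -/
theorem unique_discharge_transformation {C : Formula} (d : Ded C) :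
    ∃ d' : Ded C, hyps d' = hyps d ∧ UniqueDischarge d' := by
  induction d with
  | ass A => exact ⟨.ass A, rfl, trivial⟩
  | @andI A B C d₁ d₂ d₃ ih₁ ih₂ ih₃ =>
    obtain ⟨e₁, h₁, u₁⟩ := ih₁
    obtain ⟨e₂, h₂, u₂⟩ := ih₂
    obtain ⟨e₃, h₃, u₃⟩ := ih₃
    exact ⟨.andI e₁ e₂ (contract (.and A B) e₃), by simp only [hyps, hyps_contract, h₁, h₂, h₃],
      countOpen_contract _ _, u₁, u₂, unique_contract _ _ u₃⟩
  | @impI A B C d₁ d₂ ih₁ ih₂ =>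
    obtain ⟨e₁, h₁, u₁⟩ := ih₁
    obtain ⟨e₂, h₂, u₂⟩ := ih₂
    exact ⟨.impI A e₁ (contract (.imp A B) e₂), by simp only [hyps, hyps_contract, h₁, h₂],
      countOpen_contract _ _, u₁, unique_contract _ _ u₂⟩
  | @orI₁ A B C d₁ d₂ ih₁ ih₂ =>
    obtain ⟨e₁, h₁, u₁⟩ := ih₁
    obtain ⟨e₂, h₂, u₂⟩ := ih₂
    exact ⟨.orI₁ B e₁ (contract (.or A B) e₂), by simp only [hyps, hyps_contract, h₁, h₂],
      countOpen_contract _ _, u₁, unique_contract _ _ u₂⟩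
  | @orI₂ A B C d₁ d₂ ih₁ ih₂ =>
    obtain ⟨e₁, h₁, u₁⟩ := ih₁
    obtain ⟨e₂, h₂, u₂⟩ := ih₂
    exact ⟨.orI₂ A e₁ (contract (.or A B) e₂), by simp only [hyps, hyps_contract, h₁, h₂],
      countOpen_contract _ _, u₁, unique_contract _ _ u₂⟩
  | andE d₁ d₂ ih₁ ih₂ =>
    obtain ⟨e₁, h₁, u₁⟩ := ih₁
    obtain ⟨e₂, h₂, u₂⟩ := ih₂
    exact ⟨.andE e₁ e₂, by simp only [hyps, h₁, h₂], u₁, u₂⟩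
  | impE d₁ d₂ d₃ ih₁ ih₂ ih₃ =>
    obtain ⟨e₁, h₁, u₁⟩ := ih₁
    obtain ⟨e₂, h₂, u₂⟩ := ih₂
    obtain ⟨e₃, h₃, u₃⟩ := ih₃
    exact ⟨.impE e₁ e₂ e₃, by simp only [hyps, h₁, h₂, h₃], u₁, u₂, u₃⟩
  | orE d₁ d₂ d₃ ih₁ ih₂ ih₃ =>
    obtain ⟨e₁, h₁, u₁⟩ := ih₁
    obtain ⟨e₂, h₂, u₂⟩ := ih₂
    obtain ⟨e₃, h₃, u₃⟩ := ih₃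
    exact ⟨.orE e₁ e₂ e₃, by simp only [hyps, h₁, h₂, h₃], u₁, u₂, u₃⟩
  | falsumE d ih =>
    obtain ⟨e, h, u⟩ := ih
    exact ⟨.falsumE e, by simp only [hyps, h], u⟩
end

section
/- Any deduction in I can be transformed into a deduction of the same conclusion from the same undischarged assumptions in which every application of ⊥E has an atomic conclusion. -/
set_option autoImplicit false

/-- An atomic formula is one that contains no connective (`⊥` counts as a
connective, not as an atomic formula). -/
def Formula.IsAtomic : Formula → Prop
  | .atom _ => True
  | _ => False

/-- `FalsumEAtomic d` : every application of `⊥E` in `d` has an atomic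
conclusion. -/
def FalsumEAtomic : ∀ {C : Formula}, Ded C → Prop
  | _, .ass _ => True
  | _, .andI d₁ d₂ d₃ => FalsumEAtomic d₁ ∧ FalsumEAtomic d₂ ∧ FalsumEAtomic d₃
  | _, .impI _ d₁ d₂ => FalsumEAtomic d₁ ∧ FalsumEAtomic d₂
  | _, .orI₁ _ d₁ d₂ => FalsumEAtomic d₁ ∧ FalsumEAtomic d₂
  | _, .orI₂ _ d₁ d₂ => FalsumEAtomic d₁ ∧ FalsumEAtomic d₂
  | _, .andE d₁ d₂ => FalsumEAtomic d₁ ∧ FalsumEAtomic d₂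
  | _, .impE d₁ d₂ d₃ => FalsumEAtomic d₁ ∧ FalsumEAtomic d₂ ∧ FalsumEAtomic d₃
  | _, .orE d₁ d₂ d₃ => FalsumEAtomic d₁ ∧ FalsumEAtomic d₂ ∧ FalsumEAtomic d₃
  | C, .falsumE d => C.IsAtomic ∧ FalsumEAtomic d

theorem falsum_sub (C : Formula) (d : Ded Formula.falsum) (hd : FalsumEAtomic d) :
    ∃ e : Ded C, hyps e ⊆ hyps d ∧ FalsumEAtomic e := by
  induction C with
  | atom n => exact ⟨.falsumE d, by simp [hyps], by simp [FalsumEAtomic, Formula.IsAtomic, hd]⟩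
  | falsum => exact ⟨d, subset_rfl, hd⟩
  | and A B ihA ihB =>
    obtain ⟨a, ha, ha2⟩ := ihA
    obtain ⟨b, hb, hb2⟩ := ihB
    exact ⟨.andI a b (.ass _), by simp [hyps, ha, hb], by simp [FalsumEAtomic, ha2, hb2]⟩
  | or A B ihA ihB =>
    obtain ⟨a, ha, ha2⟩ := ihA
    exact ⟨.orI₁ B a (.ass _), by simp [hyps, ha], by simp [FalsumEAtomic, ha2]⟩
  | imp A B ihA ihB =>
    obtain ⟨b, hb, hb2⟩ := ihB
    exact ⟨.impI A b (.ass _), by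
      simp only [hyps, Set.diff_self, Set.union_empty]
      exact Set.diff_subset.trans hb, by simp [FalsumEAtomic, hb2]⟩

/-- **`⊥E` can be restricted to atomic conclusions**: any deduction in I can be
transformed into a deduction of the same conclusion from the same undischarged
assumptions in which every application of `⊥E` has an atomic conclusion. -/
theorem falsumE_atomic_transformation {C : Formula} (d : Ded C) :
    ∃ d' : Ded C, hyps d' = hyps d ∧ FalsumEAtomic d' := by
  induction d with
  | ass A => exact ⟨.ass A, rfl, by simp [FalsumEAtomic]⟩
  | andI _ _ _ h₁ h₂ h₃ =>
    obtain ⟨a, ha, ha2⟩ := h₁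
    obtain ⟨b, hb, hb2⟩ := h₂
    obtain ⟨c, hc, hc2⟩ := h₃
    exact ⟨.andI a b c, by simp only [hyps, ha, hb, hc], by simp only [FalsumEAtomic]; exact ⟨ha2, hb2, hc2⟩⟩
  | impI A _ _ h₁ h₂ =>
    obtain ⟨a, ha, ha2⟩ := h₁
    obtain ⟨b, hb, hb2⟩ := h₂
    exact ⟨.impI A a b, by simp only [hyps, ha, hb], by simp only [FalsumEAtomic]; exact ⟨ha2, hb2⟩⟩
  | orI₁ B _ _ h₁ h₂ =>
    obtain ⟨a, ha, ha2⟩ := h₁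
    obtain ⟨b, hb, hb2⟩ := h₂
    exact ⟨.orI₁ B a b, by simp only [hyps, ha, hb], by simp only [FalsumEAtomic]; exact ⟨ha2, hb2⟩⟩
  | orI₂ A _ _ h₁ h₂ =>
    obtain ⟨a, ha, ha2⟩ := h₁
    obtain ⟨b, hb, hb2⟩ := h₂
    exact ⟨.orI₂ A a b, by simp only [hyps, ha, hb], by simp only [FalsumEAtomic]; exact ⟨ha2, hb2⟩⟩
  | andE _ _ h₁ h₂ =>
    obtain ⟨a, ha, ha2⟩ := h₁
    obtain ⟨b, hb, hb2⟩ := h₂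
    exact ⟨.andE a b, by simp only [hyps, ha, hb], by simp only [FalsumEAtomic]; exact ⟨ha2, hb2⟩⟩
  | impE _ _ _ h₁ h₂ h₃ =>
    obtain ⟨a, ha, ha2⟩ := h₁
    obtain ⟨b, hb, hb2⟩ := h₂
    obtain ⟨c, hc, hc2⟩ := h₃
    exact ⟨.impE a b c, by simp only [hyps, ha, hb, hc], by simp only [FalsumEAtomic]; exact ⟨ha2, hb2, hc2⟩⟩
  | orE _ _ _ h₁ h₂ h₃ =>
    obtain ⟨a, ha, ha2⟩ := h₁
    obtain ⟨b, hb, hb2⟩ := h₂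
    obtain ⟨c, hc, hc2⟩ := h₃
    exact ⟨.orE a b c, by simp only [hyps, ha, hb, hc], by simp only [FalsumEAtomic]; exact ⟨ha2, hb2, hc2⟩⟩
  | @falsumE C _ h =>
    obtain ⟨a, ha, ha2⟩ := h
    obtain ⟨e, he, he2⟩ := falsum_sub C a ha2
    refine ⟨.andI a a e, ?_, by simp only [FalsumEAtomic]; exact ⟨ha2, ha2, he2⟩⟩
    simp only [hyps, Set.union_self, ← ha]
    exact Set.union_eq_left.2 (Set.diff_subset.trans he)
end

section
/- The system I has the disjunction property: if ⊢_I A∨B (there is a proof of A∨B with no undischarged assumptions), then ⊢_I A or ⊢_I B. -/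
set_option autoImplicit false

/-- `C` is derivable from assumptions in `S`. -/
def Pr (S : Set Formula) (C : Formula) : Prop := ∃ d : Ded C, hyps d ⊆ S

theorem subst_closed {C : Formula} (d : Ded C) :
    ∀ S : Set Formula, (∀ x ∈ hyps d, x ∈ S ∨ Pr ∅ x) → Pr S C := by
  induction d with
  | ass A =>
    intro S h
    rcases h A (by simp [hyps]) with h | ⟨d, hd⟩
    · exact ⟨.ass A, by simpa [hyps] using h⟩
    · exact ⟨d, fun x hx => (hd hx).elim⟩
  | @andI A B C d₁ d₂ d₃ i₁ i₂ i₃ =>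
    intro S h
    obtain ⟨e₁, h₁⟩ := i₁ S (fun x hx => h x (by simp [hyps, hx]))
    obtain ⟨e₂, h₂⟩ := i₂ S (fun x hx => h x (by simp [hyps, hx]))
    obtain ⟨e₃, h₃⟩ := i₃ (insert (A.and B) S) (fun x hx => by
      by_cases hx' : x = A.and B
      · simp [hx']
      · have := h x (by simp [hyps, hx, hx']); simp only [Set.mem_insert_iff]; tauto)
    refine ⟨.andI e₁ e₂ e₃, fun x hx => ?_⟩
    simp only [hyps, Set.mem_union, Set.mem_diff, Set.mem_singleton_iff] at hx
    have a := @h₁ x; have b := @h₂ x; have c := @h₃ x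
    simp only [Set.mem_insert_iff] at c; tauto
  | @impI A B C d₁ d₂ i₁ i₂ =>
    intro S h
    obtain ⟨e₁, h₁⟩ := i₁ (insert A S) (fun x hx => by
      by_cases hx' : x = A
      · simp [hx']
      · have := h x (by simp [hyps, hx, hx']); simp only [Set.mem_insert_iff]; tauto)
    obtain ⟨e₂, h₂⟩ := i₂ (insert (A.imp B) S) (fun x hx => by
      by_cases hx' : x = A.imp B
      · simp [hx']
      · have := h x (by simp [hyps, hx, hx']); simp only [Set.mem_insert_iff]; tauto)
    refine ⟨.impI A e₁ e₂, fun x hx => ?_⟩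
    simp only [hyps, Set.mem_union, Set.mem_diff, Set.mem_singleton_iff] at hx
    have a := @h₁ x; have b := @h₂ x
    simp only [Set.mem_insert_iff] at a b; tauto
  | @orI₁ A B C d₁ d₂ i₁ i₂ =>
    intro S h
    obtain ⟨e₁, h₁⟩ := i₁ S (fun x hx => h x (by simp [hyps, hx]))
    obtain ⟨e₂, h₂⟩ := i₂ (insert (A.or B) S) (fun x hx => by
      by_cases hx' : x = A.or B
      · simp [hx']
      · have := h x (by simp [hyps, hx, hx']); simp only [Set.mem_insert_iff]; tauto)
    refine ⟨.orI₁ B e₁ e₂, fun x hx => ?_⟩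
    simp only [hyps, Set.mem_union, Set.mem_diff, Set.mem_singleton_iff] at hx
    have a := @h₁ x; have b := @h₂ x
    simp only [Set.mem_insert_iff] at b; tauto
  | @orI₂ A B C d₁ d₂ i₁ i₂ =>
    intro S h
    obtain ⟨e₁, h₁⟩ := i₁ S (fun x hx => h x (by simp [hyps, hx]))
    obtain ⟨e₂, h₂⟩ := i₂ (insert (A.or B) S) (fun x hx => by
      by_cases hx' : x = A.or B
      · simp [hx']
      · have := h x (by simp [hyps, hx, hx']); simp only [Set.mem_insert_iff]; tauto)
    refine ⟨.orI₂ A e₁ e₂, fun x hx => ?_⟩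
    simp only [hyps, Set.mem_union, Set.mem_diff, Set.mem_singleton_iff] at hx
    have a := @h₁ x; have b := @h₂ x
    simp only [Set.mem_insert_iff] at b; tauto
  | @andE A B C d₁ d₂ i₁ i₂ =>
    intro S h
    obtain ⟨e₁, h₁⟩ := i₁ S (fun x hx => h x (by simp [hyps, hx]))
    obtain ⟨e₂, h₂⟩ := i₂ (insert A (insert B S)) (fun x hx => by
      by_cases hx' : x = A
      · simp [hx']
      by_cases hx'' : x = B
      · simp [hx'']
      · have := h x (by simp [hyps, hx, hx', hx'']); simp only [Set.mem_insert_iff]; tauto)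
    refine ⟨.andE e₁ e₂, fun x hx => ?_⟩
    simp only [hyps, Set.mem_union, Set.mem_diff, Set.mem_insert_iff,
      Set.mem_singleton_iff] at hx
    have a := @h₁ x; have b := @h₂ x
    simp only [Set.mem_insert_iff] at b; tauto
  | @impE A B C d₁ d₂ d₃ i₁ i₂ i₃ =>
    intro S h
    obtain ⟨e₁, h₁⟩ := i₁ S (fun x hx => h x (by simp [hyps, hx]))
    obtain ⟨e₂, h₂⟩ := i₂ S (fun x hx => h x (by simp [hyps, hx]))
    obtain ⟨e₃, h₃⟩ := i₃ (insert B S) (fun x hx => by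
      by_cases hx' : x = B
      · simp [hx']
      · have := h x (by simp [hyps, hx, hx']); simp only [Set.mem_insert_iff]; tauto)
    refine ⟨.impE e₁ e₂ e₃, fun x hx => ?_⟩
    simp only [hyps, Set.mem_union, Set.mem_diff, Set.mem_singleton_iff] at hx
    have a := @h₁ x; have b := @h₂ x; have c := @h₃ x
    simp only [Set.mem_insert_iff] at c; tauto
  | @orE A B C d₁ d₂ d₃ i₁ i₂ i₃ =>
    intro S h
    obtain ⟨e₁, h₁⟩ := i₁ S (fun x hx => h x (by simp [hyps, hx]))
    obtain ⟨e₂, h₂⟩ := i₂ (insert A S) (fun x hx => by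
      by_cases hx' : x = A
      · simp [hx']
      · have := h x (by simp [hyps, hx, hx']); simp only [Set.mem_insert_iff]; tauto)
    obtain ⟨e₃, h₃⟩ := i₃ (insert B S) (fun x hx => by
      by_cases hx' : x = B
      · simp [hx']
      · have := h x (by simp [hyps, hx, hx']); simp only [Set.mem_insert_iff]; tauto)
    refine ⟨.orE e₁ e₂ e₃, fun x hx => ?_⟩
    simp only [hyps, Set.mem_union, Set.mem_diff, Set.mem_singleton_iff] at hx
    have a := @h₁ x; have b := @h₂ x; have c := @h₃ x
    simp only [Set.mem_insert_iff] at b c; tauto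
  | falsumE d i =>
    intro S h
    obtain ⟨e, he⟩ := i S (fun x hx => h x (by simpa [hyps] using hx))
    exact ⟨.falsumE e, by simpa [hyps] using he⟩

/-- Kleene's slash. -/
def Slash : Formula → Prop
  | .atom n => Pr ∅ (.atom n)
  | .falsum => False
  | .and A B => Slash A ∧ Slash B
  | .or A B => Slash A ∨ Slash B
  | .imp A B => Pr ∅ (.imp A B) ∧ (Slash A → Slash B)

theorem Slash.pr : ∀ {A : Formula}, Slash A → Pr ∅ A
  | .atom _, h => h
  | .falsum, h => h.elim
  | .and A B, h => by
    obtain ⟨d, hd⟩ := Slash.pr h.1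
    obtain ⟨e, he⟩ := Slash.pr h.2
    exact ⟨.andI d e (.ass (A.and B)), by
      simp_all [hyps]⟩
  | .or A B, h => by
    rcases h with h | h
    · obtain ⟨d, hd⟩ := Slash.pr h
      exact ⟨.orI₁ B d (.ass (A.or B)), by simp_all [hyps]⟩
    · obtain ⟨d, hd⟩ := Slash.pr h
      exact ⟨.orI₂ A d (.ass (A.or B)), by simp_all [hyps]⟩
  | .imp _ _, h => h.1

theorem slash_sound {C : Formula} (d : Ded C) : (∀ x ∈ hyps d, Slash x) → Slash C := by
  induction d with
  | ass A => intro h; exact h A (by simp [hyps])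
  | @andI A B C d₁ d₂ d₃ i₁ i₂ i₃ =>
    intro h
    have s₁ := i₁ (fun x hx => h x (by simp [hyps, hx]))
    have s₂ := i₂ (fun x hx => h x (by simp [hyps, hx]))
    refine i₃ (fun x hx => ?_)
    by_cases hx' : x = A.and B
    · subst hx'; exact ⟨s₁, s₂⟩
    · exact h x (by simp [hyps, hx, hx'])
  | @impI A B C d₁ d₂ i₁ i₂ =>
    intro h
    refine i₂ (fun x hx => ?_)
    by_cases hx' : x = A.imp B
    · subst hx'
      constructor
      · obtain ⟨e, he⟩ := subst_closed d₁ {A} (fun x hx => by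
          by_cases hx' : x = A
          · simp [hx']
          · exact Or.inr (h x (by simp [hyps, hx, hx'])).pr)
        exact ⟨.impI A e (.ass (A.imp B)), by
          simpa [hyps, Set.diff_eq_empty] using he⟩
      · intro sA
        refine i₁ (fun x hx => ?_)
        by_cases hx' : x = A
        · rw [hx']; exact sA
        · exact h x (by simp [hyps, hx, hx'])
    · exact h x (by simp [hyps, hx, hx'])
  | @orI₁ A B C d₁ d₂ i₁ i₂ =>
    intro h
    have s₁ := i₁ (fun x hx => h x (by simp [hyps, hx]))
    refine i₂ (fun x hx => ?_)
    by_cases hx' : x = A.or B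
    · subst hx'; exact Or.inl s₁
    · exact h x (by simp [hyps, hx, hx'])
  | @orI₂ A B C d₁ d₂ i₁ i₂ =>
    intro h
    have s₁ := i₁ (fun x hx => h x (by simp [hyps, hx]))
    refine i₂ (fun x hx => ?_)
    by_cases hx' : x = A.or B
    · subst hx'; exact Or.inr s₁
    · exact h x (by simp [hyps, hx, hx'])
  | @andE A B C d₁ d₂ i₁ i₂ =>
    intro h
    have s₁ := i₁ (fun x hx => h x (by simp [hyps, hx]))
    refine i₂ (fun x hx => ?_)
    by_cases hx' : x = A
    · rw [hx']; exact s₁.1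
    by_cases hx'' : x = B
    · rw [hx'']; exact s₁.2
    · exact h x (by simp [hyps, hx, hx', hx''])
  | @impE A B C d₁ d₂ d₃ i₁ i₂ i₃ =>
    intro h
    have s₁ := i₁ (fun x hx => h x (by simp [hyps, hx]))
    have s₂ := i₂ (fun x hx => h x (by simp [hyps, hx]))
    refine i₃ (fun x hx => ?_)
    by_cases hx' : x = B
    · rw [hx']; exact s₁.2 s₂
    · exact h x (by simp [hyps, hx, hx'])
  | @orE A B C d₁ d₂ d₃ i₁ i₂ i₃ =>
    intro h
    have s₁ := i₁ (fun x hx => h x (by simp [hyps, hx]))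
    rcases s₁ with s | s
    · refine i₂ (fun x hx => ?_)
      by_cases hx' : x = A
      · rw [hx']; exact s
      · exact h x (by simp [hyps, hx, hx'])
    · refine i₃ (fun x hx => ?_)
      by_cases hx' : x = B
      · rw [hx']; exact s
      · exact h x (by simp [hyps, hx, hx'])
  | falsumE d i =>
    intro h
    exact (i (fun x hx => h x (by simpa [hyps] using hx))).elim

/-- **Disjunction property of I**: if `⊢_I A ∨ B` (there is a proof of `A ∨ B`
with no undischarged assumptions), then `⊢_I A` or `⊢_I B`. -/
theorem disjunction_property (A B : Formula)
    (h : ∃ d : Ded (Formula.or A B), hyps d = ∅) :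
    (∃ d : Ded A, hyps d = ∅) ∨ (∃ d : Ded B, hyps d = ∅) := by
  obtain ⟨d, hd⟩ := h
  have s : Slash (A.or B) := slash_sound d (by simp [hd])
  rcases s with s | s
  · obtain ⟨e, he⟩ := s.pr
    exact Or.inl ⟨e, Set.subset_empty_iff.mp he⟩
  · obtain ⟨e, he⟩ := s.pr
    exact Or.inr ⟨e, Set.subset_empty_iff.mp he⟩
end

section
/- The system I is a formalisation of intuitionistic propositional logic: for all sets of formulas Γ and formulas A, Γ ⊢_I A if and only if Γ ⊢_NJ A, where NJ is Gentzen's natural deduction system for intuitionistic propositional logic. -/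
set_option autoImplicit false

/-- Deductions in Gentzen's natural deduction system NJ for intuitionistic
propositional logic, indexed by their conclusion:

* `ass A` : the one-formula deduction of `A` from the open assumption `A`;
* `andI` : from `A` and `B` infer `A ∧ B`;
* `andE₁`, `andE₂` : from `A ∧ B` infer `A`, respectively `B`;
* `impI A d` : from a deduction of `B` in which assumptions `A` may be
  discharged, infer `A ⊃ B`;
* `impE` : from `A ⊃ B` and `A` infer `B`;
* `orI₁`, `orI₂` : from `A` (respectively `B`) infer `A ∨ B`;
* `orE` : from `A ∨ B` and two deductions of `C` in which assumptions `A`,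
  respectively `B`, may be discharged, infer `C`;
* `falsumE` : from `⊥` infer any `C`. -/
inductive NJDed : Formula → Type
  | ass (A : Formula) : NJDed A
  | andI {A B : Formula} (d₁ : NJDed A) (d₂ : NJDed B) : NJDed (Formula.and A B)
  | andE₁ {A B : Formula} (d : NJDed (Formula.and A B)) : NJDed A
  | andE₂ {A B : Formula} (d : NJDed (Formula.and A B)) : NJDed B
  | impI (A : Formula) {B : Formula} (d : NJDed B) : NJDed (Formula.imp A B)
  | impE {A B : Formula} (d₁ : NJDed (Formula.imp A B)) (d₂ : NJDed A) : NJDed B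
  | orI₁ {A : Formula} (B : Formula) (d : NJDed A) : NJDed (Formula.or A B)
  | orI₂ (A : Formula) {B : Formula} (d : NJDed B) : NJDed (Formula.or A B)
  | orE {A B C : Formula} (d₁ : NJDed (Formula.or A B)) (d₂ : NJDed C) (d₃ : NJDed C) :
      NJDed C
  | falsumE {C : Formula} (d : NJDed Formula.falsum) : NJDed C

/-- The set of undischarged (open) assumptions of an NJ-deduction: `impI A d`
discharges the assumptions `A` of `d`, and `orE d₁ d₂ d₃` discharges the
assumptions `A` of `d₂` and the assumptions `B` of `d₃`. -/
def NJhyps : ∀ {C : Formula}, NJDed C → Set Formula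
  | _, .ass A => {A}
  | _, .andI d₁ d₂ => NJhyps d₁ ∪ NJhyps d₂
  | _, .andE₁ d => NJhyps d
  | _, .andE₂ d => NJhyps d
  | _, .impI A d => NJhyps d \ {A}
  | _, .impE d₁ d₂ => NJhyps d₁ ∪ NJhyps d₂
  | _, .orI₁ _ d => NJhyps d
  | _, .orI₂ _ d => NJhyps d
  | _, @NJDed.orE A B _ d₁ d₂ d₃ => NJhyps d₁ ∪ (NJhyps d₂ \ {A}) ∪ (NJhyps d₃ \ {B})
  | _, .falsumE d => NJhyps d

theorem I_to_NJ {C : Formula} (d : Ded C) : ∃ e : NJDed C, NJhyps e ⊆ hyps d := by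
  induction d with
  | ass A => exact ⟨.ass A, by simp [NJhyps, hyps]⟩
  | andI d₁ d₂ d₃ h₁ h₂ h₃ =>
    obtain ⟨e₁, h₁⟩ := h₁
    obtain ⟨e₂, h₂⟩ := h₂
    obtain ⟨e₃, h₃⟩ := h₃
    refine ⟨.impE (.impI _ e₃) (.andI e₁ e₂), ?_⟩
    intro x
    have := @h₁ x
    have := @h₂ x
    have := @h₃ x
    simp only [NJhyps, hyps, Set.mem_union, Set.mem_diff, Set.mem_singleton_iff]
    tauto
  | impI A d₁ d₂ h₁ h₂ =>
    obtain ⟨e₁, h₁⟩ := h₁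
    obtain ⟨e₂, h₂⟩ := h₂
    refine ⟨.impE (.impI _ e₂) (.impI A e₁), ?_⟩
    intro x
    have := @h₁ x
    have := @h₂ x
    simp only [NJhyps, hyps, Set.mem_union, Set.mem_diff, Set.mem_singleton_iff]
    tauto
  | orI₁ B d₁ d₂ h₁ h₂ =>
    obtain ⟨e₁, h₁⟩ := h₁
    obtain ⟨e₂, h₂⟩ := h₂
    refine ⟨.impE (.impI _ e₂) (.orI₁ B e₁), ?_⟩
    intro x
    have := @h₁ x
    have := @h₂ x
    simp only [NJhyps, hyps, Set.mem_union, Set.mem_diff, Set.mem_singleton_iff]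
    tauto
  | orI₂ A d₁ d₂ h₁ h₂ =>
    obtain ⟨e₁, h₁⟩ := h₁
    obtain ⟨e₂, h₂⟩ := h₂
    refine ⟨.impE (.impI _ e₂) (.orI₂ A e₁), ?_⟩
    intro x
    have := @h₁ x
    have := @h₂ x
    simp only [NJhyps, hyps, Set.mem_union, Set.mem_diff, Set.mem_singleton_iff]
    tauto
  | @andE A B C d₁ d₂ h₁ h₂ =>
    obtain ⟨e₁, h₁⟩ := h₁
    obtain ⟨e₂, h₂⟩ := h₂
    refine ⟨.impE (.impE (.impI A (.impI B e₂)) (.andE₁ e₁)) (.andE₂ e₁), ?_⟩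
    intro x
    have := @h₁ x
    have := @h₂ x
    simp only [NJhyps, hyps, Set.mem_union, Set.mem_diff, Set.mem_singleton_iff,
      Set.mem_insert_iff]
    tauto
  | impE d₁ d₂ d₃ h₁ h₂ h₃ =>
    obtain ⟨e₁, h₁⟩ := h₁
    obtain ⟨e₂, h₂⟩ := h₂
    obtain ⟨e₃, h₃⟩ := h₃
    refine ⟨.impE (.impI _ e₃) (.impE e₁ e₂), ?_⟩
    intro x
    have := @h₁ x
    have := @h₂ x
    have := @h₃ x
    simp only [NJhyps, hyps, Set.mem_union, Set.mem_diff, Set.mem_singleton_iff]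
    tauto
  | orE d₁ d₂ d₃ h₁ h₂ h₃ =>
    obtain ⟨e₁, h₁⟩ := h₁
    obtain ⟨e₂, h₂⟩ := h₂
    obtain ⟨e₃, h₃⟩ := h₃
    refine ⟨.orE e₁ e₂ e₃, ?_⟩
    intro x
    have := @h₁ x
    have := @h₂ x
    have := @h₃ x
    simp only [NJhyps, hyps, Set.mem_union, Set.mem_diff, Set.mem_singleton_iff]
    tauto
  | falsumE d h =>
    obtain ⟨e, h⟩ := h
    exact ⟨.falsumE e, h⟩

theorem NJ_to_I {C : Formula} (d : NJDed C) : ∃ e : Ded C, hyps e ⊆ NJhyps d := by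
  induction d with
  | ass A => exact ⟨.ass A, by simp [NJhyps, hyps]⟩
  | @andI A B d₁ d₂ h₁ h₂ =>
    obtain ⟨e₁, h₁⟩ := h₁
    obtain ⟨e₂, h₂⟩ := h₂
    refine ⟨.andI e₁ e₂ (.ass (.and A B)), ?_⟩
    intro x
    have := @h₁ x
    have := @h₂ x
    simp only [NJhyps, hyps, Set.mem_union, Set.mem_diff, Set.mem_singleton_iff]
    tauto
  | @andE₁ A B d h =>
    obtain ⟨e, h⟩ := h
    refine ⟨.andE e (.ass A), ?_⟩
    intro x
    have := @h x
    simp only [NJhyps, hyps, Set.mem_union, Set.mem_diff, Set.mem_singleton_iff,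
      Set.mem_insert_iff]
    tauto
  | @andE₂ A B d h =>
    obtain ⟨e, h⟩ := h
    refine ⟨.andE e (.ass B), ?_⟩
    intro x
    have := @h x
    simp only [NJhyps, hyps, Set.mem_union, Set.mem_diff, Set.mem_singleton_iff,
      Set.mem_insert_iff]
    tauto
  | @impI A B d h =>
    obtain ⟨e, h⟩ := h
    refine ⟨.impI A e (.ass (.imp A B)), ?_⟩
    intro x
    have := @h x
    simp only [NJhyps, hyps, Set.mem_union, Set.mem_diff, Set.mem_singleton_iff]
    tauto
  | @impE A B d₁ d₂ h₁ h₂ =>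
    obtain ⟨e₁, h₁⟩ := h₁
    obtain ⟨e₂, h₂⟩ := h₂
    refine ⟨.impE e₁ e₂ (.ass B), ?_⟩
    intro x
    have := @h₁ x
    have := @h₂ x
    simp only [NJhyps, hyps, Set.mem_union, Set.mem_diff, Set.mem_singleton_iff]
    tauto
  | @orI₁ A B d h =>
    obtain ⟨e, h⟩ := h
    refine ⟨.orI₁ B e (.ass (.or A B)), ?_⟩
    intro x
    have := @h x
    simp only [NJhyps, hyps, Set.mem_union, Set.mem_diff, Set.mem_singleton_iff]
    tauto
  | @orI₂ A B d h =>
    obtain ⟨e, h⟩ := h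
    refine ⟨.orI₂ A e (.ass (.or A B)), ?_⟩
    intro x
    have := @h x
    simp only [NJhyps, hyps, Set.mem_union, Set.mem_diff, Set.mem_singleton_iff]
    tauto
  | orE d₁ d₂ d₃ h₁ h₂ h₃ =>
    obtain ⟨e₁, h₁⟩ := h₁
    obtain ⟨e₂, h₂⟩ := h₂
    obtain ⟨e₃, h₃⟩ := h₃
    refine ⟨.orE e₁ e₂ e₃, ?_⟩
    intro x
    have := @h₁ x
    have := @h₂ x
    have := @h₃ x
    simp only [NJhyps, hyps, Set.mem_union, Set.mem_diff, Set.mem_singleton_iff]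
    tauto
  | falsumE d h =>
    obtain ⟨e, h⟩ := h
    exact ⟨.falsumE e, h⟩

/-- **I is a formalisation of intuitionistic propositional logic**: for all
sets of formulas `Γ` and formulas `A`, `Γ ⊢_I A` if and only if `Γ ⊢_NJ A`,
where NJ is Gentzen's natural deduction system for intuitionistic propositional
logic. -/
theorem system_I_equiv_NJ (Γ : Set Formula) (A : Formula) :
    (∃ d : Ded A, hyps d ⊆ Γ) ↔ (∃ d : NJDed A, NJhyps d ⊆ Γ) := by
  constructor
  · rintro ⟨d, hd⟩
    obtain ⟨e, he⟩ := I_to_NJ d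
    exact ⟨e, he.trans hd⟩
  · rintro ⟨d, hd⟩
    obtain ⟨e, he⟩ := NJ_to_I d
    exact ⟨e, he.trans hd⟩
end
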